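/- Let d ∈ ℕ. There exists a constant C(d) > 0 depending only on d such that for every n ∈ ℕ, every Gaussian random vector X in ℝⁿ, every non-constant polynomial g on ℝⁿ of total degree at most d, and every φ ∈ C₀^∞(ℝ), one has [𝔻g(X)]^{1/(2d)} 𝔼 φ'(g(X)) ≤ C(d) ‖φ‖_∞^{1/d} ‖φ'‖_∞^{1−1/d}, where 𝔻g(X) is the variance of g(X). -/

import Mathlib

/-!
After an affine substitution the Gaussian vector is standard. Let `X`, `Y` be independent standard
Gaussian vectors, and rotate the pair to `(cos θ X + sin θ Y, -sin θ X + cos θ Y)`, which has the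
same law for every `θ`. Along this circle `u(θ) = g(cos θ X + sin θ Y)` is a trigonometric
polynomial of degree at most `d`, and `a = u'` is the derivative of `g` in the rotated direction.
Integrating `φ'(u) a² / (a² + δ²) = (φ ∘ u)' · a / (a² + δ²)` by parts in `θ` gives `O(1 / δ)`: a
trigonometric polynomial has boundedly many zeros, so the quotient has total variation `O(1 / δ)`.
Here `φ` may grow linearly away from the mean of `g(X)`, because finitely many values of a
trigonometric polynomial control its supremum.

The remaining part `φ'(g) δ² / (a² + δ²)` is a smoothed small ball probability for the polynomial
`x ↦ ⟪y, ∇g(x)⟫`, which has degree at most `d - 1`. Its second moment `Q(y)` is small for some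
directions `y`, so everything is weighted by `Q / (Q + T)` with `T = 𝔼 |∇g(X)|²`. The mean of this
weight is bounded below, and `T` dominates the variance of `g(X)` by the Poincaré inequality.
Optimizing over `δ`, the small ball estimate in degree `d - 1` yields the derivative estimate in
degree `d`. Conversely, the derivative estimate applied to a rescaled arctangent is the small ball
estimate in the same degree. The induction starts in degree one, where `⟪y, ∇g(x)⟫` does not depend
on `x`.
-/

open MeasureTheory ProbabilityTheory

/-- The standard Gaussian measure on `ℝⁿ` (i.i.d. `N(0,1)` coordinates). -/
noncomputable def stdGaussian (n : ℕ) : Measure (Fin n → ℝ) :=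
  Measure.pi fun _ => gaussianReal 0 1

/-- A (possibly degenerate) Gaussian distribution on `ℝⁿ`: the image of the standard
Gaussian measure under an affine map. -/
def IsGaussianVec {n : ℕ} (μ : Measure (Fin n → ℝ)) : Prop :=
  ∃ (L : (Fin n → ℝ) →ₗ[ℝ] (Fin n → ℝ)) (b : Fin n → ℝ),
    μ = (stdGaussian n).map (fun x => b + L x)

namespace GaussianPolynomial

section TotalVariation

variable {F f : ℝ → ℝ} {a b M : ℝ}

theorem integral_abs_le_of_hasDerivAt_of_ne_zero (hab : a ≤ b)
    (hF : ∀ t ∈ Set.Icc a b, HasDerivAt F (f t) t) (hf : ContinuousOn f (Set.Icc a b))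
    (hM : ∀ t ∈ Set.Icc a b, |F t| ≤ M) (hne : ∀ t ∈ Set.Ioo a b, f t ≠ 0) :
    ∫ t in a..b, |f t| ≤ 2 * M := by
  have ftc : ∫ t in a..b, f t = F b - F a :=
    intervalIntegral.integral_eq_sub_of_hasDerivAt (by rwa [Set.uIcc_of_le hab])
      (hf.intervalIntegrable_of_Icc hab)
  have hFa := abs_le.1 (hM a (Set.left_mem_Icc.2 hab))
  have hFb := abs_le.1 (hM b (Set.right_mem_Icc.2 hab))
  have hIoo : ∀ t ∈ Set.Ioo a b, HasDerivWithinAt F (f t) (Set.Ioo a b) t := fun t ht =>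
    (hF t (Set.Ioo_subset_Icc_self ht)).hasDerivWithinAt
  rcases hasDerivWithinAt_forall_lt_or_forall_gt_of_forall_ne (convex_Ioo a b) hIoo hne with
    hneg | hpos
  · have : ∫ t in a..b, |f t| = ∫ t in a..b, -f t := by
      simp only [intervalIntegral.integral_of_le hab, integral_Ioc_eq_integral_Ioo]
      exact setIntegral_congr_fun measurableSet_Ioo fun t ht => abs_of_neg (hneg t ht)
    rw [this, intervalIntegral.integral_neg, ftc]
    linarith
  · have : ∫ t in a..b, |f t| = ∫ t in a..b, f t := by
      simp only [intervalIntegral.integral_of_le hab, integral_Ioc_eq_integral_Ioo]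
      exact setIntegral_congr_fun measurableSet_Ioo fun t ht => abs_of_pos (hpos t ht)
    rw [this, ftc]
    linarith

theorem integral_abs_le_of_hasDerivAt_of_zeros_subset (Z : Finset ℝ) (hab : a ≤ b)
    (hF : ∀ t ∈ Set.Icc a b, HasDerivAt F (f t) t) (hf : ContinuousOn f (Set.Icc a b))
    (hM : ∀ t ∈ Set.Icc a b, |F t| ≤ M) (hZ : ∀ t ∈ Set.Ioo a b, f t = 0 → t ∈ Z) :
    ∫ t in a..b, |f t| ≤ (Z.card + 1) * (2 * M) := by
  induction Z using Finset.induction_on_max generalizing b with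
  | empty =>
    simpa using integral_abs_le_of_hasDerivAt_of_ne_zero hab hF hf hM
      fun t ht h0 => by simpa using hZ t ht h0
  | insert s Z hlt ih =>
    have hM0 : 0 ≤ M := (abs_nonneg _).trans (hM a (Set.left_mem_Icc.2 hab))
    rw [Finset.card_insert_of_notMem fun hs => (hlt s hs).false]
    push_cast
    by_cases hs : s ∈ Set.Ioo a b
    · have hleft : Set.Icc a s ⊆ Set.Icc a b := Set.Icc_subset_Icc_right hs.2.le
      have hright : Set.Icc s b ⊆ Set.Icc a b := Set.Icc_subset_Icc_left hs.1.le
      have before : ∫ t in a..s, |f t| ≤ (Z.card + 1) * (2 * M) :=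
        ih hs.1.le (fun t ht => hF t (hleft ht)) (hf.mono hleft) (fun t ht => hM t (hleft ht))
          fun t ht h0 => (Finset.mem_insert.1 (hZ t ⟨ht.1, ht.2.trans hs.2⟩ h0)).resolve_left
            ht.2.ne
      have after : ∫ t in s..b, |f t| ≤ 2 * M := by
        refine integral_abs_le_of_hasDerivAt_of_ne_zero hs.2.le (fun t ht => hF t (hright ht))
          (hf.mono hright) (fun t ht => hM t (hright ht)) fun t ht h0 => ?_
        rcases Finset.mem_insert.1 (hZ t ⟨hs.1.trans ht.1, ht.2⟩ h0) with rfl | htZ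
        · exact ht.1.false
        · exact (ht.1.trans (hlt t htZ)).false
      rw [← intervalIntegral.integral_add_adjacent_intervals
        ((hf.mono hleft).abs.intervalIntegrable_of_Icc hs.1.le)
        ((hf.mono hright).abs.intervalIntegrable_of_Icc hs.2.le)]
      linarith
    · have := ih hab hF hf hM fun t ht h0 =>
        (Finset.mem_insert.1 (hZ t ht h0)).resolve_left fun h => hs (h ▸ ht)
      linarith

end TotalVariation

section Interpolation

open Polynomial

theorem exists_norm_eval_le_mul_sum_nodes {𝕜 ι : Type*} [NormedField 𝕜] {K : Set 𝕜}
    (hK : IsCompact K) {s : Finset ι} {v : ι → 𝕜} (hv : Set.InjOn v s) :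
    ∃ C : ℝ, 0 < C ∧ ∀ P : 𝕜[X], P.degree < s.card →
      ∀ z ∈ K, ‖P.eval z‖ ≤ C * ∑ i ∈ s, ‖P.eval (v i)‖ := by
  classical
  have hbasis (i : ι) : ∃ C : ℝ, ∀ z ∈ K, ‖(Lagrange.basis s v i).eval z‖ ≤ C :=
    hK.exists_bound_of_continuousOn (Polynomial.continuous _).continuousOn
  choose C hC using hbasis
  refine ⟨1 + ∑ i ∈ s, |C i|, by positivity, fun P hP z hz => ?_⟩
  have hC_le : ∀ i ∈ s, C i ≤ 1 + ∑ j ∈ s, |C j| := fun i hi => by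
    have := Finset.single_le_sum (fun j _ => abs_nonneg (C j)) hi
    linarith [le_abs_self (C i)]
  calc ‖P.eval z‖ = ‖∑ i ∈ s, P.eval (v i) * (Lagrange.basis s v i).eval z‖ := by
        conv_lhs => rw [Lagrange.eq_interpolate hv hP]
        simp [Lagrange.interpolate_apply, eval_finsetSum]
    _ ≤ ∑ i ∈ s, (1 + ∑ j ∈ s, |C j|) * ‖P.eval (v i)‖ := by
        refine norm_sum_le_of_le s fun i hi => ?_
        rw [norm_mul, mul_comm]
        gcongr
        exact (hC i z hz).trans (hC_le i hi)
    _ = (1 + ∑ j ∈ s, |C j|) * ∑ i ∈ s, ‖P.eval (v i)‖ := (Finset.mul_sum ..).symm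

end Interpolation

section TrigPoly

open Polynomial

local notation "cexp" => Complex.exp

theorem injOn_exp_mul_I : Set.InjOn (fun θ : ℝ => cexp (θ * Complex.I)) (Set.Icc 0 1) :=
  Circle.coe_injective.comp_injOn (Circle.exp_injOn_Icc (by linarith [Real.pi_gt_three]))

theorem natDegree_X_mul_derivative_sub_le {R : Type*} [CommRing R] (P : R[X]) (c : R) :
    (X * derivative P - C c * P).natDegree ≤ P.natDegree := by
  have hX : (X * derivative P).natDegree ≤ P.natDegree := by
    rcases Nat.eq_zero_or_pos P.natDegree with h0 | hpos
    · simp [derivative_of_natDegree_zero h0]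
    · have := natDegree_mul_le_of_le natDegree_X_le (natDegree_derivative_le P)
      omega
  exact (natDegree_sub_le_of_le hX (natDegree_C_mul_le _ _)).trans_eq (max_self _)

/-- `w` is a real trigonometric polynomial of degree at most `d`, encoded as
`w θ = e^{-idθ} P (e^{iθ})` for an algebraic polynomial `P` of degree at most `2d`. -/
def IsTrigPoly (d : ℕ) (w : ℝ → ℝ) : Prop :=
  ∃ P : ℂ[X], P.natDegree ≤ 2 * d ∧
    ∀ θ : ℝ, (w θ : ℂ) * cexp (θ * Complex.I) ^ d = P.eval (cexp (θ * Complex.I))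

namespace IsTrigPoly

variable {d e : ℕ} {v w : ℝ → ℝ}

theorem const (c : ℝ) : IsTrigPoly 0 fun _ => c :=
  ⟨C (c : ℂ), by simp, fun θ => by simp⟩

theorem cos_add_sin (a b : ℝ) : IsTrigPoly 1 fun θ => Real.cos θ * a + Real.sin θ * b := by
  refine ⟨C ((a - b * Complex.I) / 2) * X ^ 2 + C ((a + b * Complex.I) / 2), by compute_degree,
    fun θ => ?_⟩
  simp only [Complex.ofReal_add, Complex.ofReal_mul, Complex.ofReal_cos, Complex.ofReal_sin,
    Complex.exp_mul_I, eval_add, eval_mul, eval_C, eval_pow, eval_X]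
  linear_combination ((a + b * Complex.I) / 2) * Complex.sin_sq_add_cos_sq (θ : ℂ) +
    Complex.sin θ * (Complex.cos θ * b - (a - b * Complex.I) / 2 * Complex.sin θ) * Complex.I_sq

theorem mono (hw : IsTrigPoly d w) (h : d ≤ e) : IsTrigPoly e w := by
  obtain ⟨P, hP, hw⟩ := hw
  refine ⟨P * X ^ (e - d), ?_, fun θ => ?_⟩
  · have := natDegree_mul_le (p := P) (q := X ^ (e - d))
    rw [natDegree_X_pow] at this
    omega
  · rw [eval_mul, ← hw, eval_pow, eval_X, mul_assoc, ← pow_add, Nat.add_sub_of_le h]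

theorem add (hv : IsTrigPoly d v) (hw : IsTrigPoly d w) : IsTrigPoly d fun θ => v θ + w θ := by
  obtain ⟨P, hP, hv⟩ := hv
  obtain ⟨Q, hQ, hw⟩ := hw
  refine ⟨P + Q, natDegree_add_le_of_degree_le hP hQ, fun θ => ?_⟩
  rw [eval_add, ← hv, ← hw]
  push_cast
  ring

theorem mul (hv : IsTrigPoly d v) (hw : IsTrigPoly e w) :
    IsTrigPoly (d + e) fun θ => v θ * w θ := by
  obtain ⟨P, hP, hv⟩ := hv
  obtain ⟨Q, hQ, hw⟩ := hw
  refine ⟨P * Q, (natDegree_mul_le_of_le hP hQ).trans_eq (by ring), fun θ => ?_⟩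
  rw [eval_mul, ← hv, ← hw]
  push_cast
  ring

theorem const_mul (c : ℝ) (hw : IsTrigPoly d w) : IsTrigPoly d fun θ => c * w θ := by
  simpa using (const c).mul hw

theorem sub (hv : IsTrigPoly d v) (hw : IsTrigPoly d w) : IsTrigPoly d fun θ => v θ - w θ := by
  simpa [sub_eq_add_neg] using hv.add (hw.const_mul (-1))

theorem pow (hw : IsTrigPoly d w) (k : ℕ) : IsTrigPoly (k * d) fun θ => w θ ^ k := by
  induction k with
  | zero => simpa using const 1
  | succ k ih => simpa [pow_succ, Nat.succ_mul] using ih.mul hw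

theorem finsetSum {ι : Type*} {s : Finset ι} {f : ι → ℝ → ℝ}
    (hf : ∀ i ∈ s, IsTrigPoly d (f i)) : IsTrigPoly d fun θ => ∑ i ∈ s, f i θ := by
  classical
  induction s using Finset.induction_on with
  | empty => simpa using (const 0).mono (Nat.zero_le d)
  | insert i s hi ih =>
    simp only [Finset.sum_insert hi]
    exact (hf i (Finset.mem_insert_self i s)).add
      (ih fun j hj => hf j (Finset.mem_insert_of_mem hj))

theorem finsetProd {ι : Type*} {s : Finset ι} {k : ι → ℕ} {f : ι → ℝ → ℝ}
    (hf : ∀ i ∈ s, IsTrigPoly (k i) (f i)) :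
    IsTrigPoly (∑ i ∈ s, k i) fun θ => ∏ i ∈ s, f i θ := by
  classical
  induction s using Finset.induction_on with
  | empty => simpa using const 1
  | insert i s hi ih =>
    simp only [Finset.prod_insert hi, Finset.sum_insert hi]
    exact (hf i (Finset.mem_insert_self i s)).mul
      (ih fun j hj => hf j (Finset.mem_insert_of_mem hj))

theorem eval_mvPolynomial {σ : Type*} {c : ℝ → σ → ℝ} (hc : ∀ i, IsTrigPoly 1 fun θ => c θ i)
    {p : MvPolynomial σ ℝ} (hp : p.totalDegree ≤ d) :
    IsTrigPoly d fun θ => MvPolynomial.eval (c θ) p := by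
  simp only [MvPolynomial.eval_eq]
  refine finsetSum fun m hm => const_mul _ ?_
  refine (finsetProd fun i _ => (hc i).pow (m i)).mono ?_
  simpa [Finsupp.sum] using (MvPolynomial.le_totalDegree hm).trans hp

theorem hasDerivAt_ofReal {P : ℂ[X]}
    (hw : ∀ θ : ℝ, (w θ : ℂ) * cexp (θ * Complex.I) ^ d = P.eval (cexp (θ * Complex.I))) (θ : ℝ) :
    HasDerivAt (fun t : ℝ => (w t : ℂ))
      (Complex.I * (X * derivative P - C (d : ℂ) * P).eval (cexp (θ * Complex.I)) /
        cexp (θ * Complex.I) ^ d) θ := by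
  have hz := Complex.exp_ne_zero (θ * Complex.I)
  have hexp : HasDerivAt (fun t : ℝ => cexp (t * Complex.I))
      (cexp (θ * Complex.I) * Complex.I) θ := by
    simpa using ((hasDerivAt_id (θ : ℂ)).mul_const Complex.I).cexp.comp_ofReal
  have hquot : (fun t : ℝ => (w t : ℂ)) =
      fun t : ℝ => P.eval (cexp (t * Complex.I)) / cexp (t * Complex.I) ^ d :=
    funext fun t => by rw [← hw, mul_div_cancel_right₀ _ (pow_ne_zero _ (Complex.exp_ne_zero _))]
  rw [hquot]
  refine (((P.hasDerivAt _).comp θ hexp).div (hexp.pow d) (pow_ne_zero d hz)).congr_deriv ?_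
  simp only [eval_sub, eval_mul, eval_X, eval_C, Function.comp_apply, Pi.pow_apply]
  rcases d with _ | d
  · simp only [pow_zero, CharP.cast_eq_zero]
    ring
  · rw [Nat.add_sub_cancel]
    field_simp
    ring

theorem exists_hasDerivAt (hw : IsTrigPoly d w) :
    ∃ w' : ℝ → ℝ, IsTrigPoly d w' ∧ ∀ θ, HasDerivAt w (w' θ) θ := by
  obtain ⟨P, hP, hw⟩ := hw
  have hderiv := hasDerivAt_ofReal hw
  set D : ℝ → ℂ := fun θ => Complex.I *
    (X * derivative P - C (d : ℂ) * P).eval (cexp (θ * Complex.I)) / cexp (θ * Complex.I) ^ d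
  have hre (θ : ℝ) : HasDerivAt w (D θ).re θ :=
    Complex.reCLM.hasFDerivAt.comp_hasDerivAt θ (hderiv θ)
  have hreal (θ : ℝ) : ((D θ).re : ℂ) = D θ := (hre θ).ofReal_comp.unique (hderiv θ)
  refine ⟨fun θ => (D θ).re, ⟨C Complex.I * (X * derivative P - C (d : ℂ) * P),
    (natDegree_C_mul_le _ _).trans ((natDegree_X_mul_derivative_sub_le P _).trans hP),
    fun θ => ?_⟩, hre⟩
  rw [hreal, div_mul_cancel₀ _ (pow_ne_zero _ (Complex.exp_ne_zero _)), eval_mul, eval_C]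

protected theorem differentiable (hw : IsTrigPoly d w) : Differentiable ℝ w := fun θ => by
  obtain ⟨w', -, h⟩ := hw.exists_hasDerivAt
  exact (h θ).differentiableAt

protected theorem deriv (hw : IsTrigPoly d w) : IsTrigPoly d (deriv w) := by
  obtain ⟨w', hw', h⟩ := hw.exists_hasDerivAt
  rwa [show deriv w = w' from funext fun θ => (h θ).deriv]

theorem eq_zero_or_zeros_subset (hw : IsTrigPoly d w) :
    (∀ θ, w θ = 0) ∨
      ∃ Z : Finset ℝ, Z.card ≤ 2 * d ∧ ∀ θ ∈ Set.Icc (0 : ℝ) 1, w θ = 0 → θ ∈ Z := by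
  obtain ⟨P, hP, hw⟩ := hw
  rcases eq_or_ne P 0 with rfl | hP0
  · left
    simpa [Complex.exp_ne_zero] using hw
  right
  have hmaps : Set.MapsTo (fun θ : ℝ => cexp (θ * Complex.I))
      {θ | θ ∈ Set.Icc (0 : ℝ) 1 ∧ w θ = 0} P.roots.toFinset := by
    rintro θ ⟨-, hθ⟩
    simp [hP0, ← hw, hθ]
  have hinj : Set.InjOn (fun θ : ℝ => cexp (θ * Complex.I))
      {θ | θ ∈ Set.Icc (0 : ℝ) 1 ∧ w θ = 0} := injOn_exp_mul_I.mono fun θ hθ => hθ.1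
  have hfin := Set.Finite.of_injOn hmaps hinj (Finset.finite_toSet _)
  refine ⟨hfin.toFinset, ?_, fun θ hθ h0 => by simpa using ⟨hθ, h0⟩⟩
  calc hfin.toFinset.card ≤ P.roots.toFinset.card :=
        Finset.card_le_card_of_injOn _ (by simpa using hmaps) (by simpa using hinj)
    _ ≤ P.natDegree := (Multiset.toFinset_card_le _).trans P.card_roots'
    _ ≤ 2 * d := hP

theorem exists_abs_le_mul_sum_nodes (d : ℕ) : ∃ K : ℝ, 0 < K ∧ ∀ w : ℝ → ℝ, IsTrigPoly d w →
    ∀ θ, |w θ| ≤ K * ∑ j ∈ Finset.range (2 * d + 1), |w (j / (2 * d + 1))| := by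
  have hnodes : Set.InjOn (fun j : ℕ => cexp ((j / (2 * d + 1) : ℝ) * Complex.I))
      (Finset.range (2 * d + 1)) := by
    refine injOn_exp_mul_I.comp (g := fun θ : ℝ => cexp (θ * Complex.I))
      (f := fun j : ℕ => (j / (2 * d + 1) : ℝ)) (fun i _ j _ hij => ?_) fun j hj => ?_
    · exact_mod_cast (div_left_inj' (by positivity)).1 hij
    · have : (j : ℝ) ≤ 2 * d + 1 := by exact_mod_cast (Finset.mem_range.1 hj).le
      exact ⟨by positivity, div_le_one_of_le₀ this (by positivity)⟩
  obtain ⟨K, hK0, hK⟩ := exists_norm_eval_le_mul_sum_nodes (isCompact_sphere (0 : ℂ) 1) hnodes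
  refine ⟨K, hK0, fun w ⟨P, hP, hw⟩ θ => ?_⟩
  have hnorm (t : ℝ) : |w t| = ‖P.eval (cexp (t * Complex.I))‖ := by
    simp [← hw, Complex.norm_exp_ofReal_mul_I]
  have hdeg : P.degree < (Finset.range (2 * d + 1)).card := by
    rw [Finset.card_range]
    exact degree_le_natDegree.trans_lt (by exact_mod_cast Nat.lt_succ_of_le hP)
  simpa only [hnorm] using hK P hdeg _ (by simp [Complex.norm_exp_ofReal_mul_I])

variable {k l : ℕ} {N M h H : ℝ → ℝ} {A S : ℝ}

theorem deriv_div_eq (hN : IsTrigPoly k N) (hM : IsTrigPoly l M) (hM0 : ∀ θ, M θ ≠ 0) :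
    deriv (fun θ => N θ / M θ) = fun θ => (deriv N θ * M θ - N θ * deriv M θ) / M θ ^ 2 :=
  funext fun θ => deriv_fun_div (hN.differentiable θ) (hM.differentiable θ) (hM0 θ)

theorem continuous_deriv_div (hN : IsTrigPoly k N) (hM : IsTrigPoly l M) (hM0 : ∀ θ, M θ ≠ 0) :
    Continuous (deriv fun θ => N θ / M θ) := by
  rw [deriv_div_eq hN hM hM0]
  exact ((hN.deriv.mul hM).sub (hN.mul hM.deriv)).differentiable.continuous.div
    (hM.differentiable.continuous.pow 2) fun θ => pow_ne_zero 2 (hM0 θ)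

theorem integral_abs_deriv_div_le (hN : IsTrigPoly k N) (hM : IsTrigPoly l M)
    (hM0 : ∀ θ, M θ ≠ 0) (hS : ∀ θ, |N θ / M θ| ≤ S) :
    ∫ θ in (0 : ℝ)..1, |deriv (fun θ => N θ / M θ) θ| ≤ (2 * (k + l) + 1) * (2 * S) := by
  have hnum : IsTrigPoly (k + l) fun θ => deriv N θ * M θ - N θ * deriv M θ :=
    (hN.deriv.mul hM).sub (hN.mul hM.deriv)
  have hderiv := congrFun (deriv_div_eq hN hM hM0)
  have hdiff : Differentiable ℝ fun θ => N θ / M θ := hN.differentiable.div hM.differentiable hM0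
  have hS0 : 0 ≤ S := (abs_nonneg _).trans (hS 0)
  rcases hnum.eq_zero_or_zeros_subset with h0 | ⟨Z, hZcard, hZ⟩
  · simp only [hderiv, h0, zero_div, abs_zero, intervalIntegral.integral_zero]
    positivity
  have hZ' : ∀ t ∈ Set.Ioo (0 : ℝ) 1, deriv (fun θ => N θ / M θ) t = 0 → t ∈ Z := fun t ht h0 =>
    hZ t (Set.Ioo_subset_Icc_self ht) (by simpa [hderiv, hM0] using h0)
  calc ∫ θ in (0 : ℝ)..1, |deriv (fun θ => N θ / M θ) θ| ≤ (Z.card + 1) * (2 * S) :=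
        integral_abs_le_of_hasDerivAt_of_zeros_subset Z zero_le_one
          (fun t _ => (hdiff t).hasDerivAt)
          (continuous_deriv_div hN hM hM0).continuousOn (fun t _ => hS t) hZ'
    _ ≤ (2 * (k + l) + 1) * (2 * S) := by
        gcongr
        exact_mod_cast hZcard

theorem integral_mul_div_le_of_hasDerivAt (hN : IsTrigPoly k N) (hM : IsTrigPoly l M)
    (hM0 : ∀ θ, M θ ≠ 0) (hS : ∀ θ, |N θ / M θ| ≤ S) (hH : ∀ θ, HasDerivAt H (h θ) θ)
    (hh : IntervalIntegrable h volume 0 1) (hA : ∀ θ, |H θ| ≤ A) :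
    ∫ θ in (0 : ℝ)..1, h θ * (N θ / M θ) ≤ (4 * (k + l) + 4) * (A * S) := by
  set R : ℝ → ℝ := fun θ => N θ / M θ
  have hR : Differentiable ℝ R := hN.differentiable.div hM.differentiable hM0
  have hR' : IntervalIntegrable (deriv R) volume 0 1 :=
    (continuous_deriv_div hN hM hM0).intervalIntegrable 0 1
  have hHR (θ : ℝ) : |H θ * R θ| ≤ A * S := by
    rw [abs_mul]
    exact mul_le_mul (hA θ) (hS θ) (abs_nonneg _) ((abs_nonneg _).trans (hA θ))
  have hrest : -∫ θ in (0 : ℝ)..1, H θ * deriv R θ ≤ A * ((2 * (k + l) + 1) * (2 * S)) := by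
    have hHR' : IntervalIntegrable (fun θ => H θ * deriv R θ) volume 0 1 :=
      hR'.continuousOn_mul fun θ _ => (hH θ).continuousAt.continuousWithinAt
    calc -∫ θ in (0 : ℝ)..1, H θ * deriv R θ = ∫ θ in (0 : ℝ)..1, -(H θ * deriv R θ) :=
          intervalIntegral.integral_neg.symm
      _ ≤ ∫ θ in (0 : ℝ)..1, A * |deriv R θ| := by
          refine intervalIntegral.integral_mono_on zero_le_one hHR'.neg (hR'.abs.const_mul A)
            fun θ _ => (neg_le_abs _).trans ?_
          rw [abs_mul]
          exact mul_le_mul_of_nonneg_right (hA θ) (abs_nonneg _)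
      _ ≤ A * ((2 * (k + l) + 1) * (2 * S)) := by
          rw [intervalIntegral.integral_const_mul]
          exact mul_le_mul_of_nonneg_left (integral_abs_deriv_div_le hN hM hM0 hS)
            ((abs_nonneg _).trans (hA 0))
  have hparts := intervalIntegral.integral_mul_deriv_eq_deriv_mul (fun θ _ => hH θ)
    (fun θ _ => (hR θ).hasDerivAt) hh hR'
  have h0 := neg_le_of_abs_le (hHR 0)
  have h1 := le_of_abs_le (hHR 1)
  linarith

end IsTrigPoly

end TrigPoly

section MeasureLemmas

variable {α β : Type*} [MeasurableSpace α] [MeasurableSpace β] {μ : Measure α} {ν : Measure β}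

theorem sq_integral_le_mul_integral_sq [IsFiniteMeasure μ] {f : α → ℝ} (hf : MemLp f 2 μ) :
    (∫ x, f x ∂μ) ^ 2 ≤ μ.real Set.univ * ∫ x, f x ^ 2 ∂μ := by
  rcases eq_zero_or_neZero μ with rfl | _
  · simp
  have hpos : 0 < μ.real Set.univ := measureReal_univ_pos
  have jensen := even_two.convexOn_pow.map_average_le (μ := μ) (f := f)
    (continuous_pow 2).continuousOn isClosed_univ (by simp) (hf.integrable one_le_two)
    hf.integrable_sq
  simp only [average_eq, smul_eq_mul] at jensen
  rw [mul_pow, inv_pow, inv_mul_le_iff₀ (by positivity)] at jensen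
  calc (∫ x, f x ∂μ) ^ 2 ≤ _ := jensen
    _ = μ.real Set.univ * ∫ x, f x ^ 2 ∂μ := by field_simp

theorem integral_abs_le_sqrt_integral_sq [IsProbabilityMeasure μ] {f : α → ℝ} (hf : MemLp f 2 μ) :
    ∫ x, |f x| ∂μ ≤ √(∫ x, f x ^ 2 ∂μ) := by
  refine Real.le_sqrt_of_sq_le ?_
  simpa using sq_integral_le_mul_integral_sq hf.abs

variable {T : β → α → α} {F : α → ℝ}

theorem integrable_comp_of_measurePreserving_family [SFinite μ] [IsFiniteMeasure ν]
    (hT : Measurable (Function.uncurry T)) (hpres : ∀ b, MeasurePreserving (T b) μ μ)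
    (hF : Integrable F μ) : Integrable (fun p : β × α => F (T p.1 p.2)) (ν.prod μ) :=
  ((MeasurePreserving.id ν).skew_product hT
    (ae_of_all _ fun b => (hpres b).map_eq)).integrable_comp_of_integrable (hF.comp_snd ν)

theorem integral_integral_comp_measurePreserving_family [SFinite μ] [IsFiniteMeasure ν]
    (hT : Measurable (Function.uncurry T)) (hpres : ∀ b, MeasurePreserving (T b) μ μ)
    (hF : Integrable F μ) :
    ∫ x, ∫ b, F (T b x) ∂ν ∂μ = ν.real Set.univ * ∫ x, F x ∂μ := by
  have hinv (b : β) : ∫ x, F (T b x) ∂μ = ∫ x, F x ∂μ := by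
    have hF' : AEStronglyMeasurable F (μ.map (T b)) := by
      rw [(hpres b).map_eq]
      exact hF.aestronglyMeasurable
    rw [← integral_map (hpres b).measurable.aemeasurable hF', (hpres b).map_eq]
  rw [← integral_integral_swap (integrable_comp_of_measurePreserving_family hT hpres hF)]
  simp [hinv]

end MeasureLemmas

local notation "γ" => (_root_.stdGaussian)

section GaussianMeasure

open Matrix

variable {n : ℕ}

instance isProbabilityMeasure_stdGaussian : IsProbabilityMeasure (γ n) :=
  inferInstanceAs (IsProbabilityMeasure (Measure.pi fun _ => gaussianReal 0 1))

theorem measurePreserving_coord (i : Fin n) :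
    MeasurePreserving (fun x : Fin n → ℝ => x i) (γ n) (gaussianReal 0 1) :=
  measurePreserving_eval (fun _ : Fin n => gaussianReal 0 1) i

instance isGaussian_stdGaussian : IsGaussian (γ n) := by
  have hindep : iIndepFun (fun (i : Fin n) (x : Fin n → ℝ) => x i) (γ n) :=
    iIndepFun_pi (X := fun _ t => t) fun _ => aemeasurable_id
  have hlaw : HasGaussianLaw (fun x : Fin n → ℝ => fun i => x i) (γ n) :=
    hindep.hasGaussianLaw fun i => ⟨by
      rw [(measurePreserving_coord i).map_eq]
      infer_instance⟩
  simpa using hlaw.isGaussian_map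

theorem memLp_coord (i : Fin n) {p : ENNReal} (hp : p ≠ ⊤) :
    MemLp (fun x : Fin n → ℝ => x i) p (γ n) :=
  (memLp_id_gaussianReal' p hp).comp_measurePreserving (measurePreserving_coord i)

theorem integral_coord (i : Fin n) : ∫ x, x i ∂γ n = 0 := by
  rw [← integral_map (φ := fun x : Fin n → ℝ => x i) (f := fun t : ℝ => t)
    (measurePreserving_coord i).measurable.aemeasurable (by fun_prop),
    (measurePreserving_coord i).map_eq, integral_id_gaussianReal]

theorem integral_strongDual (L : StrongDual ℝ (Fin n → ℝ)) : ∫ x, L x ∂γ n = 0 := by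
  have hid : ∫ x, x ∂γ n = 0 := by
    ext i
    rw [eval_integral fun j => (memLp_coord j ENNReal.one_ne_top).integrable le_rfl]
    exact integral_coord i
  rw [L.integral_comp_comm (φ := fun x => x) IsGaussian.integrable_id, hid, map_zero]

theorem map_dotProduct_stdGaussian (a : Fin n → ℝ) :
    (γ n).map (fun y => y ⬝ᵥ a) = gaussianReal 0 (a ⬝ᵥ a).toNNReal := by
  let L : StrongDual ℝ (Fin n → ℝ) := ∑ i, a i • ContinuousLinearMap.proj (R := ℝ) i
  have hL : (L : (Fin n → ℝ) → ℝ) = fun y => y ⬝ᵥ a := by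
    ext y
    simp [L, dotProduct, mul_comm]
  have hvar : Var[fun y => y ⬝ᵥ a; γ n] = a ⬝ᵥ a := by
    have hsum : (fun y => y ⬝ᵥ a) = ∑ i, fun y : Fin n → ℝ => y i * a i := by
      ext y
      simp [dotProduct]
    rw [hsum, _root_.stdGaussian, variance_sum_pi (X := fun i t => t * a i) fun i =>
      (memLp_id_gaussianReal' 2 ENNReal.ofNat_ne_top).mul_const (a i)]
    simp [variance_mul_const, dotProduct, sq]
  have hlaw := IsGaussian.map_eq_gaussianReal (μ := γ n) L
  rwa [integral_strongDual, hL, hvar] at hlaw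

theorem dotProduct_self_nonneg (a : Fin n → ℝ) : 0 ≤ a ⬝ᵥ a :=
  Finset.sum_nonneg fun i _ => mul_self_nonneg (a i)

theorem integral_comp_dotProduct (a : Fin n → ℝ) {f : ℝ → ℝ} (hf : Measurable f) :
    ∫ y, f (y ⬝ᵥ a) ∂γ n = ∫ z, f (√(a ⬝ᵥ a) * z) ∂gaussianReal 0 1 := by
  rw [← integral_map (φ := fun y : Fin n → ℝ => y ⬝ᵥ a)
      (by unfold dotProduct; exact Measurable.aemeasurable (by fun_prop)) hf.aestronglyMeasurable,
    ← integral_map (φ := fun z : ℝ => √(a ⬝ᵥ a) * z) (by fun_prop) hf.aestronglyMeasurable,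
    map_dotProduct_stdGaussian, gaussianReal_map_const_mul]
  congr 2
  · simp
  · ext
    simp [dotProduct_self_nonneg a]

theorem integral_dotProduct_sq (a : Fin n → ℝ) : ∫ y, (y ⬝ᵥ a) ^ 2 ∂γ n = a ⬝ᵥ a := by
  have hvar : ∫ z, z ^ 2 ∂gaussianReal 0 1 = 1 := by
    have := variance_fun_id_gaussianReal (μ := 0) (v := 1)
    rwa [variance_of_integral_eq_zero (by fun_prop) (by simp), NNReal.coe_one] at this
  rw [integral_comp_dotProduct a (f := fun t => t ^ 2) (by fun_prop)]
  simp only [mul_pow, integral_const_mul, hvar, mul_one]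
  exact Real.sq_sqrt (dotProduct_self_nonneg a)

/-- The constant `𝔼 (Z² / (Z² + 1))` for a standard normal `Z`. -/
noncomputable def kappa : ℝ := ∫ z, z ^ 2 / (z ^ 2 + 1) ∂gaussianReal 0 1

theorem kappa_pos : 0 < kappa := by
  have hint : Integrable (fun z : ℝ => z ^ 2 / (z ^ 2 + 1)) (gaussianReal 0 1) := by
    refine Integrable.of_bound (C := 1) (Measurable.aestronglyMeasurable (by fun_prop))
      (ae_of_all _ fun z => ?_)
    rw [Real.norm_of_nonneg (by positivity)]
    exact div_le_one_of_le₀ (by linarith) (by positivity)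
  have hsupp : Function.support (fun z : ℝ => z ^ 2 / (z ^ 2 + 1)) = {0}ᶜ := by
    ext z
    have : z ^ 2 + 1 ≠ 0 := by positivity
    simp [this]
  have := nullSingletonClass_gaussianReal (μ := 0) one_ne_zero
  rw [kappa, integral_pos_iff_support_of_nonneg (fun z => by positivity) hint, hsupp,
    prob_compl_eq_one_sub (measurableSet_singleton _)]
  simp

theorem integral_harmonic_dotProduct (a : Fin n → ℝ) :
    ∫ y, a ⬝ᵥ a * ((y ⬝ᵥ a) ^ 2 / ((y ⬝ᵥ a) ^ 2 + a ⬝ᵥ a)) ∂γ n = kappa * (a ⬝ᵥ a) := by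
  rcases eq_or_ne (a ⬝ᵥ a) 0 with h0 | h0
  · simp [h0]
  rw [integral_const_mul, mul_comm, kappa,
    integral_comp_dotProduct a (f := fun t => t ^ 2 / (t ^ 2 + a ⬝ᵥ a)) (by fun_prop)]
  congr 2 with z
  have : z ^ 2 + 1 ≠ 0 := by positivity
  rw [mul_pow, Real.sq_sqrt (dotProduct_self_nonneg a)]
  field_simp

theorem measurePreserving_rotation (θ : ℝ) :
    MeasurePreserving (ContinuousLinearMap.rotation (E := Fin n → ℝ) θ)
      ((γ n).prod (γ n)) ((γ n).prod (γ n)) :=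
  ⟨by fun_prop, IsGaussian.map_rotation_eq_self_of_forall_strongDual_eq_zero
    integral_strongDual θ⟩

theorem measurable_rotation : Measurable (Function.uncurry fun θ =>
    (ContinuousLinearMap.rotation (E := Fin n → ℝ) θ :
      (Fin n → ℝ) × (Fin n → ℝ) → (Fin n → ℝ) × (Fin n → ℝ))) := by
  unfold Function.uncurry
  simp only [ContinuousLinearMap.rotation_apply]
  fun_prop

end GaussianMeasure

section Gradient

open Matrix MvPolynomial

variable {σ R : Type*} [CommSemiring R]

theorem totalDegree_pderiv_le (i : σ) (g : MvPolynomial σ R) :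
    (pderiv i g).totalDegree ≤ g.totalDegree - 1 := by
  conv_lhs => rw [g.as_sum]
  rw [map_sum]
  refine totalDegree_finsetSum_le fun m hm => ?_
  rw [pderiv_monomial]
  by_cases hmi : m i = 0
  · simp [hmi]
  have hdeg : (m - Finsupp.single i 1).degree + 1 = m.degree := by
    have hle := Finsupp.single_le_iff.2 (Nat.one_le_iff_ne_zero.2 hmi)
    conv_rhs => rw [← tsub_add_cancel_of_le hle]
    rw [map_add, Finsupp.degree_single]
  refine (totalDegree_monomial_le _ _).trans ?_
  have hle : m.degree ≤ g.totalDegree := le_totalDegree hm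
  change (m - Finsupp.single i 1).degree ≤ _
  omega

/-- The gradient `∇g(x)` of a polynomial, as a vector of values of its partial derivatives. -/
noncomputable def grad (g : MvPolynomial σ R) (x : σ → R) : σ → R :=
  fun i => eval x (pderiv i g)

theorem exists_grad_eq_of_totalDegree_le_one {g : MvPolynomial σ R} (hg : g.totalDegree ≤ 1) :
    ∃ a, ∀ x, grad g x = a := by
  have hconst (i : σ) : ∃ c, pderiv i g = C c :=
    ⟨_, totalDegree_eq_zero_iff_eq_C.1 (by have := totalDegree_pderiv_le i g; omega)⟩
  choose a ha using hconst
  exact ⟨a, fun x => funext fun i => by simp [grad, ha]⟩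

variable [Fintype σ]

/-- The derivative `⟪y, ∇g(x)⟫` of the polynomial `g` at `x` in the direction `y`, as a function of
the pair `(x, y)`. -/
noncomputable def slope (g : MvPolynomial σ R) (z : (σ → R) × (σ → R)) : R :=
  z.2 ⬝ᵥ grad g z.1

/-- For a fixed direction `y`, the polynomial `x ↦ ⟪y, ∇g(x)⟫`. -/
noncomputable def dirDeriv (y : σ → R) (g : MvPolynomial σ R) : MvPolynomial σ R :=
  ∑ i, C (y i) * pderiv i g

theorem eval_dirDeriv (x y : σ → R) (g : MvPolynomial σ R) :
    eval x (dirDeriv y g) = slope g (x, y) := by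
  simp [dirDeriv, slope, grad, dotProduct]

theorem totalDegree_dirDeriv_le (y : σ → R) (g : MvPolynomial σ R) :
    (dirDeriv y g).totalDegree ≤ g.totalDegree - 1 := by
  refine totalDegree_finsetSum_le fun i _ => (totalDegree_mul _ _).trans ?_
  rw [totalDegree_C, zero_add]
  exact totalDegree_pderiv_le i g

theorem hasDerivAt_eval (g : MvPolynomial σ ℝ) {c : ℝ → σ → ℝ} {c' : σ → ℝ} {t : ℝ}
    (hc : ∀ i, HasDerivAt (fun s => c s i) (c' i) t) :
    HasDerivAt (fun s => eval (c s) g) (slope g (c t, c')) t := by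
  simp only [slope, grad, dotProduct]
  induction g using MvPolynomial.induction_on with
  | C a => simpa using hasDerivAt_const t a
  | add p q hp hq =>
    simp only [map_add, mul_add, Finset.sum_add_distrib]
    exact hp.add hq
  | mul_X p i hp =>
    simp only [map_mul, eval_X]
    refine (hp.mul (hc i)).congr_deriv ?_
    simp only [pderiv_mul, map_add, map_mul, eval_X, mul_add, Finset.sum_add_distrib,
      Finset.sum_mul, ← mul_assoc]
    congr 1
    rw [Finset.sum_eq_single i (fun j _ hj => by simp [hj.symm]) (by simp)]
    simp [mul_comm]

theorem continuous_slope (g : MvPolynomial σ ℝ) : Continuous (slope g) := by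
  unfold slope grad dotProduct
  exact continuous_finsetSum _ fun i _ => Continuous.mul (by fun_prop)
    ((continuous_eval _).comp continuous_fst)

end Gradient

section GaussianMoments

open Matrix MvPolynomial

variable {n : ℕ}

theorem memLp_mul_of_two_mul {α : Type*} [MeasurableSpace α] {μ : Measure α} {f g : α → ℝ}
    {p : ENNReal} (hf : MemLp f (2 * p) μ) (hg : MemLp g (2 * p) μ) :
    MemLp (fun x => f x * g x) p μ := by
  have : ENNReal.HolderTriple (2 * p) (2 * p) p := ⟨by
    rw [ENNReal.mul_inv (by simp) (by simp), ← two_mul, ← mul_assoc,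
      ENNReal.mul_inv_cancel (by simp) (by simp), one_mul]⟩
  exact hg.mul' hf

theorem memLp_eval (g : MvPolynomial (Fin n) ℝ) {p : ENNReal} (hp : p ≠ ⊤) :
    MemLp (fun x => eval x g) p (γ n) := by
  induction g using MvPolynomial.induction_on generalizing p with
  | C a => simpa using memLp_const a
  | add f h hf hh =>
    simp only [map_add]
    exact (hf hp).add (hh hp)
  | mul_X f i hf =>
    have h2p : 2 * p ≠ ⊤ := ENNReal.mul_ne_top (by simp) hp
    simpa using memLp_mul_of_two_mul (hf h2p) (memLp_coord i h2p)

theorem integrable_eval (g : MvPolynomial (Fin n) ℝ) : Integrable (fun x => eval x g) (γ n) :=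
  (memLp_eval g ENNReal.one_ne_top).integrable le_rfl

theorem measurable_eval (g : MvPolynomial (Fin n) ℝ) : Measurable fun x => eval x g :=
  (continuous_eval g).measurable

theorem integrable_slope_sq (g : MvPolynomial (Fin n) ℝ) :
    Integrable (fun z => slope g z ^ 2) ((γ n).prod (γ n)) := by
  suffices h : MemLp (slope g) 2 ((γ n).prod (γ n)) from h.integrable_sq
  unfold slope grad dotProduct
  exact memLp_finsetSum _ fun i _ => memLp_mul_of_two_mul
    ((memLp_coord i (by norm_num)).comp_measurePreserving measurePreserving_snd)
    ((memLp_eval _ (by norm_num)).comp_measurePreserving measurePreserving_fst)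

theorem integrable_slope_sq_left (g : MvPolynomial (Fin n) ℝ) (y : Fin n → ℝ) :
    Integrable (fun x => slope g (x, y) ^ 2) (γ n) := by
  simpa only [eval_dirDeriv] using (memLp_eval (dirDeriv y g) ENNReal.ofNat_ne_top).integrable_sq

theorem integrable_grad_dotProduct_grad (g : MvPolynomial (Fin n) ℝ) :
    Integrable (fun x => grad g x ⬝ᵥ grad g x) (γ n) := by
  unfold grad dotProduct
  exact integrable_finsetSum _ fun i _ => by
    simpa only [sq] using (memLp_eval (pderiv i g) ENNReal.ofNat_ne_top).integrable_sq

/-- The second moment `𝔼 |∇g(X)|²` of the gradient, for a standard Gaussian vector `X`. -/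
noncomputable def gradSq (g : MvPolynomial (Fin n) ℝ) : ℝ := ∫ x, grad g x ⬝ᵥ grad g x ∂γ n

/-- The quadratic form `y ↦ 𝔼 ⟪y, ∇g(X)⟫²`, for a standard Gaussian vector `X`. -/
noncomputable def dirSq (g : MvPolynomial (Fin n) ℝ) (y : Fin n → ℝ) : ℝ :=
  ∫ x, slope g (x, y) ^ 2 ∂γ n

theorem gradSq_nonneg (g : MvPolynomial (Fin n) ℝ) : 0 ≤ gradSq g :=
  integral_nonneg fun x => dotProduct_self_nonneg (grad g x)

theorem dirSq_nonneg (g : MvPolynomial (Fin n) ℝ) (y : Fin n → ℝ) : 0 ≤ dirSq g y :=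
  integral_nonneg fun _ => sq_nonneg _

theorem integral_slope_sq (g : MvPolynomial (Fin n) ℝ) :
    ∫ z, slope g z ^ 2 ∂(γ n).prod (γ n) = gradSq g := by
  rw [integral_prod _ (integrable_slope_sq g), gradSq]
  exact integral_congr_ae (ae_of_all _ fun x => integral_dotProduct_sq (grad g x))

theorem exists_totalDegree_le_two_eval_eq_dirSq (g : MvPolynomial (Fin n) ℝ) :
    ∃ q : MvPolynomial (Fin n) ℝ, q.totalDegree ≤ 2 ∧ ∀ y, eval y q = dirSq g y := by
  let c (i j : Fin n) : ℝ := ∫ x, eval x (pderiv i g * pderiv j g) ∂γ n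
  refine ⟨∑ i, ∑ j, C (c i j) * (X i * X j), ?_, fun y => ?_⟩
  · refine totalDegree_finsetSum_le fun i _ => totalDegree_finsetSum_le fun j _ => ?_
    refine (totalDegree_mul _ _).trans ?_
    rw [totalDegree_C, zero_add]
    exact (totalDegree_mul _ _).trans (by simp [totalDegree_X])
  have hexpand (x : Fin n → ℝ) : slope g (x, y) ^ 2 =
      ∑ i, ∑ j, eval x (pderiv i g * pderiv j g) * (y i * y j) := by
    simp only [slope, grad, dotProduct, sq, Finset.sum_mul_sum, map_mul]
    exact Finset.sum_congr rfl fun i _ => Finset.sum_congr rfl fun j _ => by ring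
  have hint (i j : Fin n) :
      Integrable (fun x => eval x (pderiv i g * pderiv j g) * (y i * y j)) (γ n) :=
    (integrable_eval _).mul_const _
  simp only [dirSq, hexpand]
  rw [integral_finsetSum _ fun i _ => integrable_finsetSum _ fun j _ => hint i j]
  simp only [map_sum]
  refine Finset.sum_congr rfl fun i _ => ?_
  rw [integral_finsetSum _ fun j _ => hint i j]
  simp [integral_mul_const, c]

theorem measurable_dirSq (g : MvPolynomial (Fin n) ℝ) : Measurable (dirSq g) := by
  obtain ⟨q, -, hq⟩ := exists_totalDegree_le_two_eval_eq_dirSq g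
  simpa only [hq] using measurable_eval q

end GaussianMoments

section Circle

open MvPolynomial

variable {n : ℕ}

theorem hasDerivAt_eval_rotation (g : MvPolynomial (Fin n) ℝ) (z : (Fin n → ℝ) × (Fin n → ℝ))
    (θ : ℝ) :
    HasDerivAt (fun t => eval (ContinuousLinearMap.rotation t z).1 g)
      (slope g (ContinuousLinearMap.rotation θ z)) θ := by
  refine hasDerivAt_eval g (c := fun t => (ContinuousLinearMap.rotation t z).1) fun i => ?_
  simp only [ContinuousLinearMap.rotation_apply, Pi.add_apply, Pi.smul_apply, smul_eq_mul]
  exact ((Real.hasDerivAt_cos θ).mul_const _).add ((Real.hasDerivAt_sin θ).mul_const _)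

variable {d : ℕ} {g : MvPolynomial (Fin n) ℝ}

theorem isTrigPoly_eval_rotation_fst (hg : g.totalDegree ≤ d) (z : (Fin n → ℝ) × (Fin n → ℝ)) :
    IsTrigPoly d fun θ => eval (ContinuousLinearMap.rotation θ z).1 g := by
  refine IsTrigPoly.eval_mvPolynomial (fun i => ?_) hg
  simpa [ContinuousLinearMap.rotation_apply] using IsTrigPoly.cos_add_sin (z.1 i) (z.2 i)

theorem isTrigPoly_eval_rotation_snd (hg : g.totalDegree ≤ d) (z : (Fin n → ℝ) × (Fin n → ℝ)) :
    IsTrigPoly d fun θ => eval (ContinuousLinearMap.rotation θ z).2 g := by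
  refine IsTrigPoly.eval_mvPolynomial (fun i => ?_) hg
  simpa [ContinuousLinearMap.rotation_apply, add_comm] using
    IsTrigPoly.cos_add_sin (z.2 i) (-z.1 i)

theorem isTrigPoly_slope_rotation (hg : g.totalDegree ≤ d) (z : (Fin n → ℝ) × (Fin n → ℝ)) :
    IsTrigPoly d fun θ => slope g (ContinuousLinearMap.rotation θ z) := by
  have hderiv := (isTrigPoly_eval_rotation_fst hg z).deriv
  rwa [funext fun θ => (hasDerivAt_eval_rotation g z θ).deriv] at hderiv

theorem isTrigPoly_dirSq_rotation (g : MvPolynomial (Fin n) ℝ)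
    (z : (Fin n → ℝ) × (Fin n → ℝ)) :
    IsTrigPoly 2 fun θ => dirSq g (ContinuousLinearMap.rotation θ z).2 := by
  obtain ⟨q, hq, heval⟩ := exists_totalDegree_le_two_eval_eq_dirSq g
  simpa only [heval] using isTrigPoly_eval_rotation_snd hq z

end Circle

section Poincare

open MvPolynomial

variable {n : ℕ}

theorem integral_sub_sq_prod {α : Type*} [MeasurableSpace α] {μ : Measure α}
    [IsProbabilityMeasure μ] {f : α → ℝ} (hf : MemLp f 2 μ) :
    ∫ z, (f z.2 - f z.1) ^ 2 ∂μ.prod μ = 2 * Var[f; μ] := by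
  have hf1 : Integrable f μ := hf.integrable one_le_two
  have hexpand (z : α × α) : (f z.2 - f z.1) ^ 2 = f z.2 ^ 2 - 2 * (f z.1 * f z.2) + f z.1 ^ 2 := by
    ring
  have hsnd : Integrable (fun z : α × α => f z.2 ^ 2) (μ.prod μ) := hf.integrable_sq.comp_snd μ
  have hfst : Integrable (fun z : α × α => f z.1 ^ 2) (μ.prod μ) := hf.integrable_sq.comp_fst μ
  have hmul : Integrable (fun z : α × α => 2 * (f z.1 * f z.2)) (μ.prod μ) :=
    (hf1.mul_prod hf1).const_mul 2
  have hsub : Integrable (fun z : α × α => f z.2 ^ 2 - 2 * (f z.1 * f z.2)) (μ.prod μ) :=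
    hsnd.sub hmul
  simp only [hexpand]
  rw [integral_add hsub hfst, integral_sub hsnd hmul, integral_const_mul,
    integral_prod_mul (μ := μ) (ν := μ) f f, integral_fun_fst (fun x => f x ^ 2),
    integral_fun_snd (fun x => f x ^ 2), variance_eq_sub hf]
  simp only [probReal_univ, one_smul, Pi.pow_apply]
  ring

/-- The mean `𝔼 g(X)`, for a standard Gaussian vector `X`. -/
noncomputable def mean (g : MvPolynomial (Fin n) ℝ) : ℝ := ∫ x, eval x g ∂γ n

/-- The standard deviation of `g(X)`, for a standard Gaussian vector `X`. -/
noncomputable def std (g : MvPolynomial (Fin n) ℝ) : ℝ := √Var[fun x => eval x g; γ n]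

theorem std_nonneg (g : MvPolynomial (Fin n) ℝ) : 0 ≤ std g :=
  Real.sqrt_nonneg _

theorem memLp_eval_sub_mean (g : MvPolynomial (Fin n) ℝ) :
    MemLp (fun x => eval x g - mean g) 2 (γ n) :=
  (memLp_eval g ENNReal.ofNat_ne_top).sub (memLp_const _)

theorem variance_eval_le (g : MvPolynomial (Fin n) ℝ) :
    Var[fun x => eval x g; γ n] ≤ 2 * gradSq g := by
  -- The path `cos θ X + sin θ Y` joins `X` to an independent copy `Y` of it.
  let ν : Measure ℝ := volume.restrict (Set.Ioc 0 (Real.pi / 2))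
  have hν : ν.real Set.univ = Real.pi / 2 := by simp [ν, (Real.pi_div_two_pos).le]
  have hpath (z : (Fin n → ℝ) × (Fin n → ℝ)) :
      (eval z.2 g - eval z.1 g) ^ 2 ≤
        Real.pi / 2 * ∫ θ, slope g (ContinuousLinearMap.rotation θ z) ^ 2 ∂ν := by
    have hcont : Continuous fun θ => slope g (ContinuousLinearMap.rotation θ z) :=
      (isTrigPoly_slope_rotation le_rfl z).differentiable.continuous
    have hftc := intervalIntegral.integral_eq_sub_of_hasDerivAt (a := 0) (b := Real.pi / 2)
      (fun θ _ => hasDerivAt_eval_rotation g z θ) (hcont.intervalIntegrable _ _)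
    have hL2 : MemLp (fun θ => slope g (ContinuousLinearMap.rotation θ z)) 2 ν :=
      (memLp_two_iff_integrable_sq hcont.aestronglyMeasurable).2 (hcont.pow 2).integrableOn_Ioc
    have hcs := sq_integral_le_mul_integral_sq hL2
    rw [intervalIntegral.integral_of_le (by positivity)] at hftc
    rw [hν, hftc] at hcs
    simpa [ContinuousLinearMap.rotation_apply] using hcs
  have hmono := integral_mono_of_nonneg (μ := (γ n).prod (γ n)) (ae_of_all _ fun z => sq_nonneg _)
    ((integrable_comp_of_measurePreserving_family measurable_rotation measurePreserving_rotation
      (ν := ν) (integrable_slope_sq g)).integral_prod_right.const_mul _) (ae_of_all _ hpath)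
  rw [integral_sub_sq_prod (memLp_eval g ENNReal.ofNat_ne_top), integral_const_mul,
    integral_integral_comp_measurePreserving_family measurable_rotation measurePreserving_rotation
      (integrable_slope_sq g), integral_slope_sq, hν] at hmono
  have hpi : Real.pi / 2 * (Real.pi / 2) ≤ 4 := by nlinarith [Real.pi_le_four, Real.pi_pos]
  nlinarith [gradSq_nonneg g]

theorem std_le (g : MvPolynomial (Fin n) ℝ) : std g ≤ 2 * √(gradSq g) := by
  have hvar : Var[fun x => eval x g; γ n] ≤ 2 ^ 2 * gradSq g := by
    linarith [variance_eval_le g, gradSq_nonneg g]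
  simpa [std] using Real.sqrt_le_sqrt hvar

theorem integral_abs_sub_mean_le (g : MvPolynomial (Fin n) ℝ) :
    ∫ x, |eval x g - mean g| ∂γ n ≤ std g := by
  rw [std, variance_eq_integral (measurable_eval g).aemeasurable]
  exact integral_abs_le_sqrt_integral_sq (memLp_eval_sub_mean g)

end Poincare

section Weight

open Matrix MvPolynomial

variable {n : ℕ}

theorem div_add_mem_Icc {a b : ℝ} (ha : 0 ≤ a) (hb : 0 ≤ b) : a / (a + b) ∈ Set.Icc (0 : ℝ) 1 :=
  ⟨by positivity, div_le_one_of_le₀ (by linarith) (by positivity)⟩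

theorem mul_div_add_le {p s P S : ℝ} (hp : 0 ≤ p) (hs : 0 ≤ s) (hPS : 0 < S + P) :
    p * (s / (s + p)) ≤ p * (S / (S + P)) ^ 2 + s * (P / (S + P)) ^ 2 := by
  rcases hp.eq_or_lt with rfl | hp
  · rw [zero_mul, zero_mul, zero_add]
    positivity
  rw [← sub_nonneg, show p * (S / (S + P)) ^ 2 + s * (P / (S + P)) ^ 2 - p * (s / (s + p))
    = (p * S - s * P) ^ 2 / ((S + P) ^ 2 * (s + p)) by field_simp; ring]
  positivity

-- Jensen's inequality for the concave homogeneous function `(p, s) ↦ p s / (p + s)`.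
theorem integral_mul_div_add_le {α : Type*} [MeasurableSpace α] {μ : Measure α} {p s : α → ℝ}
    (hp : Integrable p μ) (hs : Integrable s μ) (hp0 : ∀ x, 0 ≤ p x) (hs0 : ∀ x, 0 ≤ s x)
    (hpos : 0 < ∫ x, p x ∂μ) :
    ∫ x, p x * (s x / (s x + p x)) ∂μ ≤
      (∫ x, p x ∂μ) * ((∫ x, s x ∂μ) / (∫ x, s x ∂μ + ∫ x, p x ∂μ)) := by
  have hS : 0 ≤ ∫ x, s x ∂μ := integral_nonneg hs0
  set P := ∫ x, p x ∂μ
  set S := ∫ x, s x ∂μ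
  calc ∫ x, p x * (s x / (s x + p x)) ∂μ
      ≤ ∫ x, (p x * (S / (S + P)) ^ 2 + s x * (P / (S + P)) ^ 2) ∂μ :=
        integral_mono_of_nonneg
          (ae_of_all _ fun x => mul_nonneg (hp0 x) (div_add_mem_Icc (hs0 x) (hp0 x)).1)
          ((hp.mul_const _).add (hs.mul_const _))
          (ae_of_all _ fun x => mul_div_add_le (hp0 x) (hs0 x) (by positivity))
    _ = P * (S / (S + P)) ^ 2 + S * (P / (S + P)) ^ 2 := by
        rw [integral_add (hp.mul_const _) (hs.mul_const _), integral_mul_const, integral_mul_const]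
    _ = P * (S / (S + P)) := by field_simp

/-- The weight `Q / (Q + T)` of a direction `y`, where `Q = 𝔼 ⟪y, ∇g(X)⟫²` and `T = 𝔼 |∇g(X)|²`. It
suppresses the directions in which the derivative of `g` is small. -/
noncomputable def weight (g : MvPolynomial (Fin n) ℝ) (y : Fin n → ℝ) : ℝ :=
  dirSq g y / (dirSq g y + gradSq g)

theorem weight_mem_Icc (g : MvPolynomial (Fin n) ℝ) (y : Fin n → ℝ) :
    weight g y ∈ Set.Icc (0 : ℝ) 1 :=
  div_add_mem_Icc (dirSq_nonneg g y) (gradSq_nonneg g)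

theorem measurable_weight (g : MvPolynomial (Fin n) ℝ) : Measurable (weight g) :=
  (measurable_dirSq g).div ((measurable_dirSq g).add_const _)

theorem integrable_weight (g : MvPolynomial (Fin n) ℝ) : Integrable (weight g) (γ n) :=
  Integrable.of_mem_Icc 0 1 (measurable_weight g).aemeasurable (ae_of_all _ (weight_mem_Icc g))

-- For fixed `x` the mean over `y` of `⟪y, ∇g(x)⟫² / (⟪y, ∇g(x)⟫² + |∇g(x)|²)` is the constant
-- `kappa`; averaging over `x` with the density `|∇g(x)|²` can only increase it, by Jensen.
theorem kappa_le_integral_weight {g : MvPolynomial (Fin n) ℝ} (hg : 0 < gradSq g) :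
    kappa ≤ ∫ y, weight g y ∂γ n := by
  let p (x : Fin n → ℝ) : ℝ := grad g x ⬝ᵥ grad g x
  let F (z : (Fin n → ℝ) × (Fin n → ℝ)) : ℝ := p z.1 * (slope g z ^ 2 / (slope g z ^ 2 + p z.1))
  have hp : Integrable p (γ n) := integrable_grad_dotProduct_grad g
  have hp0 (x : Fin n → ℝ) : 0 ≤ p x := dotProduct_self_nonneg _
  have hF : Integrable F ((γ n).prod (γ n)) := by
    have hslope : AEMeasurable (fun z => slope g z ^ 2) ((γ n).prod (γ n)) :=
      (integrable_slope_sq g).aemeasurable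
    have hratio := hslope.div (hslope.add (hp.comp_fst (γ n)).aemeasurable)
    refine (hp.comp_fst (γ n)).mul_bdd (c := 1) hratio.aestronglyMeasurable
      (ae_of_all _ fun z => ?_)
    have hmem := div_add_mem_Icc (sq_nonneg (slope g z)) (hp0 z.1)
    rw [Real.norm_of_nonneg hmem.1]
    exact hmem.2
  have hfst (x : Fin n → ℝ) : ∫ y, F (x, y) ∂γ n = kappa * p x :=
    integral_harmonic_dotProduct (grad g x)
  have hsnd (y : Fin n → ℝ) : ∫ x, F (x, y) ∂γ n ≤ gradSq g * weight g y :=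
    integral_mul_div_add_le hp (integrable_slope_sq_left g y) hp0 (fun _ => sq_nonneg _) hg
  have hmean : kappa * gradSq g ≤ (∫ y, weight g y ∂γ n) * gradSq g :=
    calc kappa * gradSq g = ∫ z, F z ∂(γ n).prod (γ n) := by
          simp only [integral_prod F hF, hfst, integral_const_mul]
          rfl
      _ = ∫ y, ∫ x, F (x, y) ∂γ n ∂γ n := integral_prod_symm F hF
      _ ≤ ∫ y, gradSq g * weight g y ∂γ n :=
          integral_mono hF.integral_prod_right ((integrable_weight g).const_mul _) hsnd
      _ = (∫ y, weight g y ∂γ n) * gradSq g := by rw [integral_const_mul, mul_comm]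
  exact le_of_mul_le_mul_right hmean hg

end Weight

section IntegrationByParts

open MvPolynomial

variable {n d : ℕ} {g : MvPolynomial (Fin n) ℝ} {φ : ℝ → ℝ} {A B δ : ℝ}

/-- A test function for `g`: it grows at most linearly away from the mean of `g`, at a rate measured
by `A`, and its derivative is bounded by `B`. -/
structure IsTestFunction (g : MvPolynomial (Fin n) ℝ) (φ : ℝ → ℝ) (A B : ℝ) : Prop where
  differentiable : Differentiable ℝ φ
  pos_left : 0 < A
  pos_right : 0 < B
  abs_le : ∀ x, |φ x| ≤ A * (std g + |x - mean g|)
  abs_deriv_le : ∀ x, |deriv φ x| ≤ B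

theorem IsTestFunction.integrable_deriv_mul (hφ : IsTestFunction g φ A B) {α : Type*}
    [MeasurableSpace α] {μ : Measure α} {f w : α → ℝ} (hf : Measurable f) (hw : Integrable w μ) :
    Integrable (fun x => deriv φ (f x) * w x) μ :=
  hw.bdd_mul (c := B) ((measurable_deriv φ).comp hf).aestronglyMeasurable
    (ae_of_all _ fun x => hφ.abs_deriv_le (f x))

/-- The integrand of the weighted integration by parts: `φ'(g(x))`, with the pairs `(x, y)` for
which the derivative of `g` at `x` along `y` is below the scale `δ` suppressed. -/
noncomputable def weightedDeriv (g : MvPolynomial (Fin n) ℝ) (φ : ℝ → ℝ) (δ : ℝ)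
    (z : (Fin n → ℝ) × (Fin n → ℝ)) : ℝ :=
  deriv φ (eval z.1 g) * (weight g z.2 * (slope g z ^ 2 / (slope g z ^ 2 + δ ^ 2)))

theorem IsTestFunction.integrable_weightedDeriv (hφ : IsTestFunction g φ A B) (δ : ℝ) :
    Integrable (weightedDeriv g φ δ) ((γ n).prod (γ n)) := by
  have hslope : Measurable fun z => slope g z ^ 2 := (continuous_slope g).measurable.pow_const 2
  refine hφ.integrable_deriv_mul ((measurable_eval g).comp measurable_fst) <|
    Integrable.of_mem_Icc 0 1 (((measurable_weight g).comp measurable_snd).mul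
      (hslope.div (hslope.add_const _))).aemeasurable (ae_of_all _ fun z => ?_)
  exact unitInterval.mul_mem (weight_mem_Icc g z.2) (div_add_mem_Icc (sq_nonneg _) (sq_nonneg _))

theorem abs_div_sq_add_sq_le (a : ℝ) (hδ : 0 < δ) : |a / (a ^ 2 + δ ^ 2)| ≤ 1 / (2 * δ) := by
  rw [abs_div, abs_of_pos (show 0 < a ^ 2 + δ ^ 2 by positivity),
    div_le_div_iff₀ (by positivity) (by positivity), one_mul, ← sq_abs a]
  linarith [two_mul_le_add_sq |a| δ]

-- Along the circle `θ ↦ rotation θ z` the slope of `g` is the derivative of `g`, so dividing by it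
-- turns `φ'(g)` into a total derivative times a quotient of trigonometric polynomials.
theorem IsTestFunction.integral_weightedDeriv_rotation_le (hφ : IsTestFunction g φ A B)
    (hg : g.totalDegree ≤ d) (hT : 0 < gradSq g) (hδ : 0 < δ) (z : (Fin n → ℝ) × (Fin n → ℝ))
    {S : ℝ} (hS : ∀ θ, |eval (ContinuousLinearMap.rotation θ z).1 g - mean g| ≤ S) :
    ∫ θ in (0 : ℝ)..1, weightedDeriv g φ δ (ContinuousLinearMap.rotation θ z) ≤
      (6 * d + 10) * (A * (std g + S) / δ) := by
  let u (θ : ℝ) : ℝ := eval (ContinuousLinearMap.rotation θ z).1 g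
  let a (θ : ℝ) : ℝ := slope g (ContinuousLinearMap.rotation θ z)
  let Q (θ : ℝ) : ℝ := dirSq g (ContinuousLinearMap.rotation θ z).2
  have hu (θ : ℝ) : HasDerivAt u (a θ) θ := hasDerivAt_eval_rotation g z θ
  have ha : IsTrigPoly d a := isTrigPoly_slope_rotation hg z
  have hQ : IsTrigPoly 2 Q := isTrigPoly_dirSq_rotation g z
  have hQ0 (θ : ℝ) : 0 ≤ Q θ := dirSq_nonneg g _
  have hnum : IsTrigPoly (2 + d) fun θ => Q θ * a θ := hQ.mul ha
  have hden : IsTrigPoly (2 + 2 * d) fun θ => (Q θ + gradSq g) * (a θ ^ 2 + δ ^ 2) :=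
    (hQ.add ((IsTrigPoly.const _).mono (Nat.zero_le _))).mul
      ((ha.pow 2).add ((IsTrigPoly.const _).mono (Nat.zero_le _)))
  have hden0 (θ : ℝ) : (Q θ + gradSq g) * (a θ ^ 2 + δ ^ 2) ≠ 0 := by
    have := hQ0 θ
    positivity
  have hquot (θ : ℝ) :
      |Q θ * a θ / ((Q θ + gradSq g) * (a θ ^ 2 + δ ^ 2))| ≤ 1 / (2 * δ) := by
    have hw := div_add_mem_Icc (hQ0 θ) hT.le
    rw [mul_div_mul_comm, abs_mul, abs_of_nonneg hw.1, ← one_mul (1 / (2 * δ))]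
    exact mul_le_mul hw.2 (abs_div_sq_add_sq_le _ hδ) (abs_nonneg _) zero_le_one
  have hint : IntervalIntegrable (fun θ => deriv φ (u θ) * a θ) volume 0 1 :=
    (intervalIntegrable_iff_integrableOn_Ioc_of_le zero_le_one).2 <| hφ.integrable_deriv_mul
      (continuous_iff_continuousAt.2 fun θ => (hu θ).continuousAt).measurable
      ha.differentiable.continuous.integrableOn_Ioc
  have hsup (θ : ℝ) : |φ (u θ)| ≤ A * (std g + S) :=
    (hφ.abs_le _).trans (mul_le_mul_of_nonneg_left (by linarith [hS θ]) hφ.pos_left.le)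
  have hibp := hnum.integral_mul_div_le_of_hasDerivAt hden hden0 hquot
    (fun θ => (hφ.differentiable (u θ)).hasDerivAt.comp θ (hu θ)) hint hsup
  convert hibp using 1
  · refine intervalIntegral.integral_congr fun θ _ => ?_
    simp only [weightedDeriv, weight]
    rw [div_mul_div_comm]
    ring
  · push_cast
    field_simp
    ring

theorem measurePreserving_rotation_fst (θ : ℝ) :
    MeasurePreserving (fun z : (Fin n → ℝ) × (Fin n → ℝ) => (ContinuousLinearMap.rotation θ z).1)
      ((γ n).prod (γ n)) (γ n) :=
  measurePreserving_fst.comp (measurePreserving_rotation θ)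

theorem integrable_abs_eval_rotation_sub_mean (g : MvPolynomial (Fin n) ℝ) (θ : ℝ) :
    Integrable (fun z => |eval (ContinuousLinearMap.rotation θ z).1 g - mean g|)
      ((γ n).prod (γ n)) :=
  (measurePreserving_rotation_fst θ).integrable_comp_of_integrable
    ((memLp_eval_sub_mean g).integrable one_le_two).abs

theorem integral_abs_eval_rotation_sub_mean_le (g : MvPolynomial (Fin n) ℝ) (θ : ℝ) :
    ∫ z, |eval (ContinuousLinearMap.rotation θ z).1 g - mean g| ∂(γ n).prod (γ n) ≤ std g := by
  rw [← integral_map (f := fun x => |eval x g - mean g|)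
    (measurePreserving_rotation_fst θ).measurable.aemeasurable
    (((measurable_eval g).sub_const _).abs).aestronglyMeasurable,
    (measurePreserving_rotation_fst θ).map_eq]
  exact integral_abs_sub_mean_le g

theorem exists_integral_weightedDeriv_le (d : ℕ) : ∃ C : ℝ, 0 < C ∧
    ∀ (n : ℕ) (g : MvPolynomial (Fin n) ℝ), g.totalDegree ≤ d → 0 < gradSq g →
      ∀ (φ : ℝ → ℝ) (A B : ℝ), IsTestFunction g φ A B → ∀ δ, 0 < δ →
        ∫ z, weightedDeriv g φ δ z ∂(γ n).prod (γ n) ≤ C * (A * std g / δ) := by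
  obtain ⟨K, hK0, hK⟩ := IsTrigPoly.exists_abs_le_mul_sum_nodes d
  refine ⟨(6 * d + 10) * (1 + K * (2 * d + 1)), by positivity, fun n g hg hT φ A B hφ δ hδ => ?_⟩
  let R (z : (Fin n → ℝ) × (Fin n → ℝ)) : ℝ := ∑ j ∈ Finset.range (2 * d + 1),
    |eval (ContinuousLinearMap.rotation (j / (2 * d + 1) : ℝ) z).1 g - mean g|
  have hRint : Integrable R ((γ n).prod (γ n)) :=
    integrable_finsetSum _ fun j _ => integrable_abs_eval_rotation_sub_mean g _
  have hR : ∫ z, R z ∂(γ n).prod (γ n) ≤ (2 * d + 1) * std g := by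
    rw [integral_finsetSum _ fun j _ => integrable_abs_eval_rotation_sub_mean g _]
    exact (Finset.sum_le_card_nsmul _ _ _
      fun j _ => integral_abs_eval_rotation_sub_mean_le g _).trans (by simp)
  have hcircle (z : (Fin n → ℝ) × (Fin n → ℝ)) :
      ∫ θ in Set.Ioc (0 : ℝ) 1, weightedDeriv g φ δ (ContinuousLinearMap.rotation θ z) ≤
        (6 * d + 10) * (A * (std g + K * R z) / δ) := by
    rw [← intervalIntegral.integral_of_le zero_le_one]
    exact hφ.integral_weightedDeriv_rotation_le hg hT hδ z
      (hK _ ((isTrigPoly_eval_rotation_fst hg z).sub ((IsTrigPoly.const _).mono (Nat.zero_le _))))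
  have hA := hφ.pos_left
  calc ∫ z, weightedDeriv g φ δ z ∂(γ n).prod (γ n)
      = ∫ z, (∫ θ in Set.Ioc (0 : ℝ) 1, weightedDeriv g φ δ (ContinuousLinearMap.rotation θ z))
          ∂(γ n).prod (γ n) := by
        rw [integral_integral_comp_measurePreserving_family measurable_rotation
          measurePreserving_rotation (hφ.integrable_weightedDeriv δ)]
        simp
    _ ≤ ∫ z, (6 * d + 10) * (A * (std g + K * R z) / δ) ∂(γ n).prod (γ n) :=
        integral_mono (integrable_comp_of_measurePreserving_family measurable_rotation
          measurePreserving_rotation (hφ.integrable_weightedDeriv δ)).integral_prod_right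
          (((((integrable_const _).add (hRint.const_mul K)).const_mul A).div_const δ).const_mul _)
          hcircle
    _ = (6 * d + 10) * (A * (std g + K * ∫ z, R z ∂(γ n).prod (γ n)) / δ) := by
        rw [integral_const_mul, integral_div, integral_const_mul,
          integral_add (integrable_const _) (hRint.const_mul K), integral_const_mul]
        simp
    _ ≤ (6 * d + 10) * (A * (std g + K * ((2 * d + 1) * std g)) / δ) := by gcongr
    _ = (6 * d + 10) * (1 + K * (2 * d + 1)) * (A * std g / δ) := by ring

end IntegrationByParts

section Induction

open MvPolynomial Matrix

variable {n : ℕ} {g : MvPolynomial (Fin n) ℝ} {φ : ℝ → ℝ} {A B δ β : ℝ}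

theorem le_rpow_mul_rpow {E : ℝ} (hA : 0 ≤ A) (hB : 0 ≤ B) (hβ : β ∈ Set.Icc (0 : ℝ) 1)
    (hEA : E ≤ A) (hEB : E ≤ B) : E ≤ A ^ β * B ^ (1 - β) := by
  rcases le_or_gt E 0 with hE | hE
  · exact hE.trans (by positivity)
  calc E = E ^ β * E ^ (1 - β) := by rw [← Real.rpow_add hE, add_sub_cancel, Real.rpow_one]
    _ ≤ A ^ β * B ^ (1 - β) := mul_le_mul (Real.rpow_le_rpow hE.le hEA hβ.1)
        (Real.rpow_le_rpow hE.le hEB (sub_nonneg.2 hβ.2)) (by positivity) (by positivity)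

theorem one_div_natCast_mem_Icc (k : ℕ) : 1 / (k : ℝ) ∈ Set.Icc (0 : ℝ) 1 :=
  ⟨by positivity, by simpa using Nat.cast_inv_le_one (α := ℝ) k⟩

theorem le_div_of_mul_le_of_le {E κ W R : ℝ} (hκ : 0 < κ) (hκW : κ ≤ W) (hR : 0 ≤ R)
    (h : E * W ≤ R) : E ≤ R / κ :=
  ((le_div_iff₀ (hκ.trans_le hκW)).2 h).trans (div_le_div_of_nonneg_left hR hκ hκW)

theorem integral_eval_eq_of_gradSq_eq_zero (hg : gradSq g = 0) (f : ℝ → ℝ) :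
    ∫ x, f (eval x g) ∂γ n = f (mean g) := by
  have hstd : std g ≤ 0 := by simpa [hg] using std_le g
  have hzero : ∫ x, |eval x g - mean g| ∂γ n = 0 :=
    le_antisymm ((integral_abs_sub_mean_le g).trans hstd) (integral_nonneg fun _ => abs_nonneg _)
  rw [integral_eq_zero_iff_of_nonneg (fun _ => abs_nonneg _)
    ((memLp_eval_sub_mean g).integrable one_le_two).abs] at hzero
  have hae : (fun x => f (eval x g)) =ᵐ[γ n] fun _ => f (mean g) := by
    filter_upwards [hzero] with x hx
    rw [sub_eq_zero.1 (abs_eq_zero.1 hx)]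
  simp [integral_congr_ae hae]

theorem IsTestFunction.deriv_mean_le (hφ : IsTestFunction g φ A B) (hstd : std g = 0) :
    deriv φ (mean g) ≤ A := by
  have hbound (x : ℝ) : |φ x| ≤ A * |x - mean g| := by simpa [hstd] using hφ.abs_le x
  have hmean : φ (mean g) = 0 := by simpa using hbound (mean g)
  refine (Real.le_norm_self _).trans (norm_deriv_le_of_lip' hφ.pos_left.le ?_)
  exact Filter.Eventually.of_forall fun x => by simpa [hmean] using hbound x

theorem IsTestFunction.integral_deriv_le_of_gradSq_eq_zero (hφ : IsTestFunction g φ A B)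
    (hg : gradSq g = 0) (hβ : β ∈ Set.Icc (0 : ℝ) 1) :
    ∫ x, deriv φ (eval x g) ∂γ n ≤ A ^ β * B ^ (1 - β) := by
  have hstd : std g = 0 := le_antisymm (by simpa [hg] using std_le g) (std_nonneg g)
  rw [integral_eval_eq_of_gradSq_eq_zero hg (deriv φ)]
  exact le_rpow_mul_rpow hφ.pos_left.le hφ.pos_right.le hβ (hφ.deriv_mean_le hstd)
    ((le_abs_self _).trans (hφ.abs_deriv_le _))

theorem std_div_mul_sqrt_gradSq_le (hg : 0 < gradSq g) {t : ℝ} (ht : 0 < t) :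
    std g / (t * √(gradSq g)) ≤ 2 / t := by
  rw [div_le_div_iff₀ (by positivity) ht]
  nlinarith [std_le g]

/-- The derivative estimate in degree `d`, for the standard Gaussian measure in every dimension. -/
def DerivBound (d : ℕ) : Prop :=
  ∃ C : ℝ, 0 < C ∧ ∀ (n : ℕ) (g : MvPolynomial (Fin n) ℝ), g.totalDegree ≤ d →
    ∀ (φ : ℝ → ℝ) (A B : ℝ), IsTestFunction g φ A B →
      ∫ x, deriv φ (eval x g) ∂γ n ≤ C * (A ^ (1 / (d : ℝ)) * B ^ (1 - 1 / (d : ℝ)))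

/-- The small ball estimate in degree `d`: a polynomial `h` in standard Gaussian variables is
smaller than `δ` with probability at most `C (δ / ‖h‖₂) ^ (1 / d)`. The indicator of `|h| < δ` is
smoothed out, and no division by the `L²` norm occurs, so that it may vanish. -/
def SmallBall (d : ℕ) : Prop :=
  ∃ C : ℝ, 0 < C ∧ ∀ (n : ℕ) (h : MvPolynomial (Fin n) ℝ), h.totalDegree ≤ d →
    ∀ δ, 0 < δ → √(∫ x, eval x h ^ 2 ∂γ n) ^ (1 / (d : ℝ)) *
      ∫ x, δ ^ 2 / (eval x h ^ 2 + δ ^ 2) ∂γ n ≤ C * δ ^ (1 / (d : ℝ))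

-- In degree one the gradient is constant, so `slope² / (slope² + δ²)` with `δ² = gradSq g` is again
-- the weight, and the integration by parts alone suffices.
theorem derivBound_one : DerivBound 1 := by
  obtain ⟨C, hC, hbound⟩ := exists_integral_weightedDeriv_le 1
  refine ⟨max 1 (2 * C / kappa ^ 2), by positivity, fun n g hg φ A B hφ => ?_⟩
  have hA := hφ.pos_left
  have hB := hφ.pos_right
  rcases (gradSq_nonneg g).eq_or_lt with hT | hT
  · exact (hφ.integral_deriv_le_of_gradSq_eq_zero hT.symm (one_div_natCast_mem_Icc 1)).trans
      (le_mul_of_one_le_left (by positivity) (le_max_left _ _))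
  obtain ⟨a, ha⟩ := exists_grad_eq_of_totalDegree_le_one hg
  have hslope (z : (Fin n → ℝ) × (Fin n → ℝ)) : slope g z ^ 2 = dirSq g z.2 := by
    simp [dirSq, slope, ha]
  have hsplit : ∫ z, weightedDeriv g φ (√(gradSq g)) z ∂(γ n).prod (γ n) =
      (∫ x, deriv φ (eval x g) ∂γ n) * ∫ y, weight g y ^ 2 ∂γ n := by
    rw [← integral_prod_mul]
    simp only [weightedDeriv, hslope, Real.sq_sqrt hT.le, weight, sq]
  have hweight : kappa ^ 2 ≤ ∫ y, weight g y ^ 2 ∂γ n := by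
    have hL2 : MemLp (weight g) 2 (γ n) :=
      memLp_of_bounded (ae_of_all _ (weight_mem_Icc g)) (measurable_weight g).aestronglyMeasurable 2
    calc kappa ^ 2 ≤ (∫ y, weight g y ∂γ n) ^ 2 := by
          gcongr
          exacts [kappa_pos.le, kappa_le_integral_weight hT]
      _ ≤ ∫ y, weight g y ^ 2 ∂γ n := by simpa using sq_integral_le_mul_integral_sq hL2
  have hle : (∫ x, deriv φ (eval x g) ∂γ n) * ∫ y, weight g y ^ 2 ∂γ n ≤ 2 * C * A := by
    rw [← hsplit]
    refine (hbound n g hg hT φ A B hφ _ (Real.sqrt_pos.2 hT)).trans ?_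
    have := std_div_mul_sqrt_gradSq_le hT one_pos
    rw [one_mul, div_one] at this
    calc C * (A * std g / √(gradSq g)) = C * A * (std g / √(gradSq g)) := by ring
      _ ≤ C * A * 2 := by gcongr
      _ = 2 * C * A := by ring
  calc ∫ x, deriv φ (eval x g) ∂γ n ≤ 2 * C * A / kappa ^ 2 :=
        le_div_of_mul_le_of_le (pow_pos kappa_pos 2) hweight (by positivity) hle
    _ = 2 * C / kappa ^ 2 * A := by ring
    _ ≤ max 1 (2 * C / kappa ^ 2) * A := by gcongr; exact le_max_right _ _
    _ = _ := by simp

theorem integrable_weight_mul_div (g : MvPolynomial (Fin n) ℝ) (δ : ℝ) :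
    Integrable (fun z : (Fin n → ℝ) × (Fin n → ℝ) =>
      weight g z.2 * (δ ^ 2 / (slope g z ^ 2 + δ ^ 2))) ((γ n).prod (γ n)) := by
  have hslope : Measurable fun z => slope g z ^ 2 := (continuous_slope g).measurable.pow_const 2
  refine Integrable.of_mem_Icc 0 1 (((measurable_weight g).comp measurable_snd).mul
    (measurable_const.div (hslope.add_const _))).aemeasurable (ae_of_all _ fun z => ?_)
  rw [add_comm]
  exact unitInterval.mul_mem (weight_mem_Icc g z.2) (div_add_mem_Icc (sq_nonneg _) (sq_nonneg _))

theorem IsTestFunction.integral_deriv_mul_integral_weight_le (hφ : IsTestFunction g φ A B)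
    (hδ : 0 < δ) :
    (∫ x, deriv φ (eval x g) ∂γ n) * ∫ y, weight g y ∂γ n ≤
      ∫ z, weightedDeriv g φ δ z ∂(γ n).prod (γ n) +
        B * ∫ z, weight g z.2 * (δ ^ 2 / (slope g z ^ 2 + δ ^ 2)) ∂(γ n).prod (γ n) := by
  have hrest := integrable_weight_mul_div g δ
  rw [← integral_prod_mul, ← integral_const_mul,
    ← integral_add (hφ.integrable_weightedDeriv δ) (hrest.const_mul B)]
  refine integral_mono (hφ.integrable_deriv_mul ((measurable_eval g).comp measurable_fst)
    ((integrable_weight g).comp_snd _))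
    ((hφ.integrable_weightedDeriv δ).add (hrest.const_mul B)) fun z => ?_
  have hw := (weight_mem_Icc g z.2).1
  calc deriv φ (eval z.1 g) * weight g z.2
      = weightedDeriv g φ δ z +
          deriv φ (eval z.1 g) * (weight g z.2 * (δ ^ 2 / (slope g z ^ 2 + δ ^ 2))) := by
        have : slope g z ^ 2 + δ ^ 2 ≠ 0 := by positivity
        simp only [weightedDeriv]
        field_simp
    _ ≤ _ := by
        gcongr
        exact (le_abs_self _).trans (hφ.abs_deriv_le _)

theorem div_add_le_rpow {q t α : ℝ} (hq : 0 ≤ q) (ht : 0 < t) (hα : α ∈ Set.Icc (0 : ℝ) 1) :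
    q / (q + t) ≤ (√q / √t) ^ α := by
  have hle : q / (q + t) ≤ √q / √t := by
    have hqt : 2 * (√q * √t) ≤ q + t := by
      nlinarith [sq_nonneg (√q - √t), Real.sq_sqrt hq, Real.sq_sqrt ht.le]
    rw [div_le_div_iff₀ (by positivity) (by positivity)]
    nlinarith [Real.sqrt_nonneg q, Real.sqrt_nonneg t, Real.sq_sqrt hq,
      mul_nonneg (Real.sqrt_nonneg q) (Real.sqrt_nonneg t)]
  simpa using le_rpow_mul_rpow (by positivity) zero_le_one hα hle (div_add_mem_Icc hq ht.le).2

theorem div_add_mul_le_of_rpow_mul_le {q t s p C α : ℝ} (hq : 0 ≤ q) (ht : 0 < t) (hs : 0 ≤ s)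
    (hp : 0 ≤ p) (hα : α ∈ Set.Icc (0 : ℝ) 1) (h : √q ^ α * p ≤ C * (s * √t) ^ α) :
    q / (q + t) * p ≤ C * s ^ α := by
  have htα : 0 < √t ^ α := by positivity
  calc q / (q + t) * p ≤ (√q / √t) ^ α * p := by gcongr; exact div_add_le_rpow hq ht hα
    _ = √q ^ α * p / √t ^ α := by
        rw [Real.div_rpow (Real.sqrt_nonneg _) (Real.sqrt_nonneg _), div_mul_eq_mul_div]
    _ ≤ C * (s * √t) ^ α / √t ^ α := by gcongr
    _ = C * s ^ α := by
        rw [Real.mul_rpow hs (Real.sqrt_nonneg _), ← mul_assoc, mul_div_cancel_right₀ _ htα.ne']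

theorem SmallBall.exists_integral_weight_mul_div_le {k : ℕ} (h : SmallBall k) :
    ∃ C : ℝ, 0 < C ∧ ∀ (n : ℕ) (g : MvPolynomial (Fin n) ℝ), g.totalDegree ≤ k + 1 →
      0 < gradSq g → ∀ t, 0 < t →
        ∫ z, weight g z.2 * ((t * √(gradSq g)) ^ 2 / (slope g z ^ 2 + (t * √(gradSq g)) ^ 2))
          ∂(γ n).prod (γ n) ≤ C * t ^ (1 / (k : ℝ)) := by
  obtain ⟨C, hC, hball⟩ := h
  refine ⟨C, hC, fun n g hg hT t ht => ?_⟩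
  let δ := t * √(gradSq g)
  have hδ : 0 < δ := by positivity
  have hdir (y : Fin n → ℝ) :
      ∫ x, weight g y * (δ ^ 2 / (slope g (x, y) ^ 2 + δ ^ 2)) ∂γ n ≤ C * t ^ (1 / (k : ℝ)) := by
    have hdeg : (dirDeriv y g).totalDegree ≤ k := (totalDegree_dirDeriv_le y g).trans (by omega)
    have hsmall := hball n (dirDeriv y g) hdeg δ hδ
    simp only [eval_dirDeriv] at hsmall
    rw [integral_const_mul]
    exact div_add_mul_le_of_rpow_mul_le (dirSq_nonneg g y) hT ht.le
      (integral_nonneg fun x => by positivity) (one_div_natCast_mem_Icc k) hsmall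
  rw [integral_prod_symm _ (integrable_weight_mul_div g δ)]
  calc ∫ y, (∫ x, weight g y * (δ ^ 2 / (slope g (x, y) ^ 2 + δ ^ 2)) ∂γ n) ∂γ n
      ≤ ∫ _, C * t ^ (1 / (k : ℝ)) ∂γ n :=
        integral_mono (integrable_weight_mul_div g δ).integral_prod_right (integrable_const _) hdir
    _ = C * t ^ (1 / (k : ℝ)) := by simp

theorem exists_div_eq_and_mul_rpow_eq (hA : 0 < A) (hB : 0 < B) {k : ℕ} (hk : k ≠ 0) :
    ∃ t, 0 < t ∧
      A / t = A ^ (1 / ((k + 1 : ℕ) : ℝ)) * B ^ (1 - 1 / ((k + 1 : ℕ) : ℝ)) ∧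
      B * t ^ (1 / (k : ℝ)) = A ^ (1 / ((k + 1 : ℕ) : ℝ)) * B ^ (1 - 1 / ((k + 1 : ℕ) : ℝ)) := by
  let β : ℝ := 1 / ((k + 1 : ℕ) : ℝ)
  have hβ : (1 - β) * (1 / (k : ℝ)) = β := by
    simp only [β]
    push_cast
    field_simp
    ring
  refine ⟨(A / B) ^ (1 - β), by positivity, ?_, ?_⟩
  · rw [Real.div_rpow hA.le hB.le, div_div_eq_mul_div, mul_div_right_comm]
    nth_rewrite 1 [← Real.rpow_one A]
    rw [← Real.rpow_sub hA, sub_sub_cancel]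
  · rw [← Real.rpow_mul (by positivity), hβ, Real.div_rpow hA.le hB.le, Real.rpow_sub hB,
      Real.rpow_one]
    ring

theorem SmallBall.derivBound_succ {k : ℕ} (hk : k ≠ 0) (h : SmallBall k) : DerivBound (k + 1) := by
  obtain ⟨C₁, hC₁, hibp⟩ := exists_integral_weightedDeriv_le (k + 1)
  obtain ⟨C₂, hC₂, hrest⟩ := h.exists_integral_weight_mul_div_le
  refine ⟨max 1 ((2 * C₁ + C₂) / kappa), by positivity, fun n g hg φ A B hφ => ?_⟩
  have hA := hφ.pos_left
  have hB := hφ.pos_right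
  have hκ := kappa_pos
  rcases (gradSq_nonneg g).eq_or_lt with hT | hT
  · exact (hφ.integral_deriv_le_of_gradSq_eq_zero hT.symm (one_div_natCast_mem_Icc _)).trans
      (le_mul_of_one_le_left (by positivity) (le_max_left _ _))
  obtain ⟨t, ht, hAt, hBt⟩ := exists_div_eq_and_mul_rpow_eq hA hB hk
  have hδ : 0 < t * √(gradSq g) := by positivity
  rw [← hAt] at hBt ⊢
  have hle : (∫ x, deriv φ (eval x g) ∂γ n) * ∫ y, weight g y ∂γ n ≤
      (2 * C₁ + C₂) * (A / t) :=
    calc (∫ x, deriv φ (eval x g) ∂γ n) * ∫ y, weight g y ∂γ n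
        ≤ C₁ * (A * std g / (t * √(gradSq g))) + B * (C₂ * t ^ (1 / (k : ℝ))) :=
          (hφ.integral_deriv_mul_integral_weight_le hδ).trans <| add_le_add
            (hibp n g hg hT φ A B hφ _ hδ) (mul_le_mul_of_nonneg_left (hrest n g hg hT t ht) hB.le)
      _ = C₁ * (A * (std g / (t * √(gradSq g)))) + C₂ * (B * t ^ (1 / (k : ℝ))) := by ring
      _ ≤ C₁ * (A * (2 / t)) + C₂ * (A / t) := by
          have := std_div_mul_sqrt_gradSq_le hT ht
          rw [hBt]
          gcongr
      _ = (2 * C₁ + C₂) * (A / t) := by ring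
  calc ∫ x, deriv φ (eval x g) ∂γ n ≤ (2 * C₁ + C₂) * (A / t) / kappa :=
        le_div_of_mul_le_of_le hκ (kappa_le_integral_weight hT) (by positivity) hle
    _ = (2 * C₁ + C₂) / kappa * (A / t) := by ring
    _ ≤ max 1 ((2 * C₁ + C₂) / kappa) * (A / t) := by gcongr; exact le_max_right _ _

theorem abs_arctan_sub_le (x m : ℝ) : |Real.arctan x - Real.arctan m| ≤ 4 := by
  rw [abs_le]
  constructor <;>
    linarith [Real.arctan_lt_pi_div_two x, Real.neg_pi_div_two_lt_arctan x,
      Real.arctan_lt_pi_div_two m, Real.neg_pi_div_two_lt_arctan m, Real.pi_lt_four]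

theorem abs_arctan_sub_mul_le (x m : ℝ) :
    |Real.arctan x - Real.arctan m| * |m| ≤ 8 * |x - m| := by
  rcases le_total (|m| / 2) |x - m| with hfar | hnear
  · nlinarith [abs_arctan_sub_le x m, abs_nonneg m]
  have hderiv (y : ℝ) (hy : y ∈ Metric.closedBall m (|m| / 2)) :
      ‖1 / (1 + y ^ 2)‖ ≤ 1 / (1 + m ^ 2 / 4) := by
    have hy : |m| / 2 ≤ |y| := by
      rw [Metric.mem_closedBall, dist_comm, Real.dist_eq] at hy
      linarith [abs_sub_abs_le_abs_sub m y]
    have hsq : m ^ 2 / 4 ≤ y ^ 2 := by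
      rw [← sq_abs m, ← sq_abs y]
      nlinarith [abs_nonneg m]
    rw [Real.norm_of_nonneg (by positivity)]
    gcongr
  have hmv := (convex_closedBall m (|m| / 2)).norm_image_sub_le_of_norm_hasDerivWithin_le
    (fun y _ => (Real.hasDerivAt_arctan y).hasDerivWithinAt) hderiv
    (Metric.mem_closedBall_self (by positivity)) (Metric.mem_closedBall.2 hnear)
  have hm : |m| ≤ 1 + m ^ 2 / 4 := by
    rw [← sq_abs m]
    nlinarith [sq_nonneg (|m| - 2)]
  calc |Real.arctan x - Real.arctan m| * |m|
      ≤ 1 / (1 + m ^ 2 / 4) * |x - m| * (1 + m ^ 2 / 4) :=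
        mul_le_mul hmv hm (abs_nonneg _) (by positivity)
    _ = |x - m| := by field_simp
    _ ≤ 8 * |x - m| := by linarith [abs_nonneg (x - m)]

theorem hasDerivAt_mul_arctan_div (hδ : 0 < δ) (c x : ℝ) :
    HasDerivAt (fun x => δ * (Real.arctan (x / δ) - c)) (δ ^ 2 / (x ^ 2 + δ ^ 2)) x := by
  refine (((((hasDerivAt_id x).div_const δ).arctan).sub_const c).const_mul δ).congr_deriv ?_
  have : x ^ 2 + δ ^ 2 ≠ 0 := by positivity
  simp only [id]
  field_simp
  ring

theorem isTestFunction_mul_arctan_div (hg : 0 < std g + |mean g|) (hδ : 0 < δ) :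
    IsTestFunction g (fun x => δ * (Real.arctan (x / δ) - Real.arctan (mean g / δ)))
      (8 * δ / (std g + |mean g|)) 1 where
  differentiable x := (hasDerivAt_mul_arctan_div hδ _ x).differentiableAt
  pos_left := by positivity
  pos_right := one_pos
  abs_le x := by
    have hσ := std_nonneg g
    have hbdd := abs_arctan_sub_le (x / δ) (mean g / δ)
    have hdecay := abs_arctan_sub_mul_le (x / δ) (mean g / δ)
    rw [← sub_div, abs_div, abs_div, abs_of_pos hδ, ← mul_div_assoc, ← mul_div_assoc,
      div_le_div_iff_of_pos_right hδ] at hdecay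
    rw [abs_mul, abs_of_pos hδ, div_mul_eq_mul_div, le_div_iff₀ hg]
    calc δ * |Real.arctan (x / δ) - Real.arctan (mean g / δ)| * (std g + |mean g|)
        ≤ δ * (4 * std g + 8 * |x - mean g|) := by
          rw [mul_assoc, mul_add]
          gcongr
      _ ≤ 8 * δ * (std g + |x - mean g|) := by nlinarith [mul_nonneg hδ.le hσ]
  abs_deriv_le x := by
    rw [(hasDerivAt_mul_arctan_div hδ _ x).deriv, add_comm, abs_of_nonneg (by positivity)]
    exact (div_add_mem_Icc (sq_nonneg δ) (sq_nonneg x)).2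

theorem sqrt_integral_sq_le_std_add_abs_mean (g : MvPolynomial (Fin n) ℝ) :
    √(∫ x, eval x g ^ 2 ∂γ n) ≤ std g + |mean g| := by
  have hvar : std g ^ 2 = ∫ x, eval x g ^ 2 ∂γ n - mean g ^ 2 := by
    rw [std, Real.sq_sqrt (variance_nonneg _ _),
      variance_eq_sub (memLp_eval g ENNReal.ofNat_ne_top)]
    rfl
  have hσ := std_nonneg g
  refine Real.sqrt_le_iff.2 ⟨by positivity, ?_⟩
  nlinarith [sq_abs (mean g), mul_nonneg hσ (abs_nonneg (mean g))]

theorem DerivBound.smallBall {d : ℕ} (hd : d ≠ 0) (h : DerivBound d) : SmallBall d := by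
  obtain ⟨C, hC, hbound⟩ := h
  refine ⟨C * 8 ^ (1 / (d : ℝ)), by positivity, fun n g hg δ hδ => ?_⟩
  have hsqrt := sqrt_integral_sq_le_std_add_abs_mean g
  have hsqrt0 := Real.sqrt_nonneg (∫ x, eval x g ^ 2 ∂γ n)
  rcases (hsqrt0.trans hsqrt).eq_or_lt with hM | hM
  · rw [le_antisymm (hM ▸ hsqrt) hsqrt0, Real.zero_rpow (by positivity), zero_mul]
    positivity
  have hsmall := hbound n g hg _ _ _ (isTestFunction_mul_arctan_div hM hδ)
  simp only [(hasDerivAt_mul_arctan_div hδ _ _).deriv, Real.one_rpow, mul_one] at hsmall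
  calc √(∫ x, eval x g ^ 2 ∂γ n) ^ (1 / (d : ℝ)) * ∫ x, δ ^ 2 / (eval x g ^ 2 + δ ^ 2) ∂γ n
      ≤ (std g + |mean g|) ^ (1 / (d : ℝ)) *
          (C * (8 * δ / (std g + |mean g|)) ^ (1 / (d : ℝ))) := by gcongr
    _ = C * 8 ^ (1 / (d : ℝ)) * δ ^ (1 / (d : ℝ)) := by
        rw [mul_left_comm, ← Real.mul_rpow hM.le (by positivity), mul_div_cancel₀ _ hM.ne',
          Real.mul_rpow (by norm_num) hδ.le, mul_assoc]

theorem derivBound (k : ℕ) : DerivBound (k + 1) := by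
  induction k with
  | zero => exact derivBound_one
  | succ k ih => exact (ih.smallBall k.succ_ne_zero).derivBound_succ k.succ_ne_zero

end Induction

section GaussianVector

open MvPolynomial

theorem totalDegree_bind₁_le {σ τ R : Type*} [CommSemiring R] {f : σ → MvPolynomial τ R}
    (hf : ∀ i, (f i).totalDegree ≤ 1) (g : MvPolynomial σ R) :
    (bind₁ f g).totalDegree ≤ g.totalDegree := by
  conv_lhs => rw [g.as_sum]
  rw [map_sum]
  refine totalDegree_finsetSum_le fun m hm => ?_
  rw [bind₁_monomial]
  refine (totalDegree_mul _ _).trans ?_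
  rw [totalDegree_C, zero_add]
  refine (totalDegree_finsetProd _ _).trans (le_trans ?_ (le_totalDegree hm))
  exact Finset.sum_le_sum fun i _ =>
    (totalDegree_pow _ _).trans ((Nat.mul_le_mul_left _ (hf i)).trans_eq (mul_one _))

theorem exists_totalDegree_le_eval_eq_eval_affine {σ τ R : Type*} [Finite σ] [CommSemiring R]
    (L : (σ → R) →ₗ[R] (τ → R)) (b : τ → R) (g : MvPolynomial τ R) :
    ∃ f : MvPolynomial σ R, f.totalDegree ≤ g.totalDegree ∧
      ∀ x, eval x f = eval (b + L x) g := by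
  classical
  have := Fintype.ofFinite σ
  let p (i : τ) : MvPolynomial σ R := C (b i) + L.toMatrix'.toMvPolynomial i
  have hp (x : σ → R) (i : τ) : eval x (p i) = (b + L x) i := by
    simp [p, Matrix.toMvPolynomial_eval_eq_apply, LinearMap.toMatrix'_mulVec]
  refine ⟨bind₁ p g, totalDegree_bind₁_le (fun i => (totalDegree_add _ _).trans
    (max_le (by simp) (L.toMatrix'.toMvPolynomial_totalDegree_le i))) g, fun x => ?_⟩
  rw [eval, eval₂Hom_bind₁]
  exact congrArg (eval · g) (funext (hp x))

variable {n : ℕ}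

theorem exists_identDistrib_eval {μ : Measure (Fin n → ℝ)} (hμ : IsGaussianVec μ)
    (g : MvPolynomial (Fin n) ℝ) :
    ∃ f : MvPolynomial (Fin n) ℝ, f.totalDegree ≤ g.totalDegree ∧
      IdentDistrib (fun x => eval x g) (fun x => eval x f) μ (γ n) := by
  obtain ⟨L, b, rfl⟩ := hμ
  obtain ⟨f, hdeg, hf⟩ := exists_totalDegree_le_eval_eq_eval_affine L b g
  have haff : Measurable fun x => b + L x :=
    (continuous_const.add L.continuous_of_finiteDimensional).measurable
  refine ⟨f, hdeg, (measurable_eval g).aemeasurable, (measurable_eval f).aemeasurable, ?_⟩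
  rw [Measure.map_map (measurable_eval g) haff]
  exact congrArg (Measure.map · (γ n)) (funext fun x => (hf x).symm)

variable {d : ℕ} {g : MvPolynomial (Fin n) ℝ} {φ : ℝ → ℝ} {A B : ℝ}

theorem isTestFunction_of_abs_le (hg : 0 < std g) (hφ : Differentiable ℝ φ)
    (hA : ∀ x, |φ x| ≤ A) (hB : ∀ x, |deriv φ x| ≤ B) {x₀ : ℝ} (hx₀ : deriv φ x₀ ≠ 0) :
    IsTestFunction g φ (A / std g) B := by
  have hA0 : 0 < A := by
    by_contra! hA0
    have hφ0 : φ = fun _ => 0 := funext fun x => abs_nonpos_iff.1 ((hA x).trans hA0)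
    simp [hφ0] at hx₀
  refine ⟨hφ, by positivity, (abs_pos.2 hx₀).trans_le (hB x₀), fun x => ?_, hB⟩
  calc |φ x| ≤ A / std g * std g := by rw [div_mul_cancel₀ _ hg.ne']; exact hA x
    _ ≤ A / std g * (std g + |x - mean g|) := by
        gcongr
        exact le_add_of_nonneg_right (abs_nonneg _)

theorem std_rpow_mul_integral_deriv_le {C β : ℝ} (hC : 0 < C) (hβ : 0 < β)
    (hφ : Differentiable ℝ φ) (hA : ∀ x, |φ x| ≤ A) (hB : ∀ x, |deriv φ x| ≤ B)
    (h : ∀ A', IsTestFunction g φ A' B →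
      ∫ x, deriv φ (eval x g) ∂γ n ≤ C * (A' ^ β * B ^ (1 - β))) :
    std g ^ β * ∫ x, deriv φ (eval x g) ∂γ n ≤ C * A ^ β * B ^ (1 - β) := by
  have hA0 : 0 ≤ A := (abs_nonneg _).trans (hA 0)
  have hB0 : 0 ≤ B := (abs_nonneg _).trans (hB 0)
  rcases (std_nonneg g).eq_or_lt with hσ | hσ
  · rw [← hσ, Real.zero_rpow hβ.ne', zero_mul]
    positivity
  by_cases hconst : ∀ x, deriv φ x = 0
  · simp only [hconst, integral_zero, mul_zero]
    positivity
  obtain ⟨x₀, hx₀⟩ := not_forall.1 hconst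
  calc std g ^ β * ∫ x, deriv φ (eval x g) ∂γ n
      ≤ std g ^ β * (C * ((A / std g) ^ β * B ^ (1 - β))) := by
        gcongr
        exact h _ (isTestFunction_of_abs_le hσ hφ hA hB hx₀)
    _ = C * A ^ β * B ^ (1 - β) := by
        rw [Real.div_rpow hA0 hσ.le]
        field_simp

end GaussianVector

end GaussianPolynomial

open GaussianPolynomial in
theorem expectation_deriv_bound_general (d : ℕ) (hd : 1 ≤ d) :
    ∃ C : ℝ, 0 < C ∧
      ∀ (n : ℕ) (μ : Measure (Fin n → ℝ)), IsGaussianVec μ →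
        ∀ g : MvPolynomial (Fin n) ℝ, g.totalDegree ≤ d →
          ∀ φ : ℝ → ℝ, Differentiable ℝ φ → BddAbove (Set.range fun x => |φ x|) →
            BddAbove (Set.range fun x => |deriv φ x|) →
            (variance (fun x => MvPolynomial.eval x g) μ) ^ ((1 : ℝ) / (2 * d)) *
                ∫ x, deriv φ (MvPolynomial.eval x g) ∂μ
              ≤ C * (⨆ x : ℝ, |φ x|) ^ ((1 : ℝ) / d) *
                  (⨆ x : ℝ, |deriv φ x|) ^ (1 - (1 : ℝ) / d) := by
  obtain ⟨k, rfl⟩ := Nat.exists_eq_add_of_le' hd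
  obtain ⟨C, hC, hbound⟩ := derivBound k
  refine ⟨C, hC, fun n μ hμ g hg φ hφ hA hB => ?_⟩
  obtain ⟨f, hf, hfg⟩ := exists_identDistrib_eval hμ g
  have hstd : (variance (fun x => MvPolynomial.eval x f) (stdGaussian n)) ^
      ((1 : ℝ) / (2 * (k + 1 : ℕ))) = std f ^ ((1 : ℝ) / (k + 1 : ℕ)) := by
    rw [std, Real.sqrt_eq_rpow, ← Real.rpow_mul (variance_nonneg _ _), div_mul_div_comm, one_mul]
  have hint : ∫ x, deriv φ (MvPolynomial.eval x g) ∂μ =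
      ∫ x, deriv φ (MvPolynomial.eval x f) ∂stdGaussian n :=
    (hfg.comp (measurable_deriv φ)).integral_eq
  rw [hfg.variance_eq, hstd, hint]
  exact std_rpow_mul_integral_deriv_le hC (by positivity) hφ (fun x => le_ciSup hA x)
    (fun x => le_ciSup hB x) fun A' htest => hbound n f (hf.trans hg) φ A' _ htest

/-- Theorem: for every `d` there is `C(d) > 0` such that for every Gaussian random vector `X`
in `ℝⁿ`, every non-constant (as a random variable) polynomial `g` of total degree at most `d`,
and every `φ ∈ C₀^∞(ℝ)`, one has
`(𝔻g(X))^{1/(2d)} 𝔼 φ'(g(X)) ≤ C(d) ‖φ‖_∞^{1/d} ‖φ'‖_∞^{1-1/d}`. -/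
theorem expectation_deriv_bound (d : ℕ) (hd : 1 ≤ d) :
    ∃ C : ℝ, 0 < C ∧
      ∀ (n : ℕ) (μ : Measure (Fin n → ℝ)), IsGaussianVec μ →
        ∀ g : MvPolynomial (Fin n) ℝ, g.totalDegree ≤ d →
          0 < variance (fun x => MvPolynomial.eval x g) μ →
          ∀ φ : ℝ → ℝ, ContDiff ℝ (⊤ : ℕ∞) φ → HasCompactSupport φ →
            (variance (fun x => MvPolynomial.eval x g) μ) ^ ((1 : ℝ) / (2 * d)) *
                ∫ x, deriv φ (MvPolynomial.eval x g) ∂μ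
              ≤ C * (⨆ x : ℝ, |φ x|) ^ ((1 : ℝ) / d) *
                  (⨆ x : ℝ, |deriv φ x|) ^ (1 - (1 : ℝ) / d) := by
  obtain ⟨C, hC, hbound⟩ := expectation_deriv_bound_general d hd
  exact ⟨C, hC, fun n μ hμ g hg _ φ hφ hφs => hbound n μ hμ g hg φ (hφ.differentiable (by simp))
    (hφ.continuous.abs.bddAbove_range_of_hasCompactSupport hφs.abs)
    ((hφ.continuous_deriv (by simp)).abs.bddAbove_range_of_hasCompactSupport hφs.deriv.abs)⟩
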